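/- arXiv:math/0702277 — 2 statements merged into one kernel-verified Lean document; each statement's English description precedes it below -/
import Mathlib

section
/- Let N ≥ 2 and let η^1 ≥ η^2 ≥ … ≥ η^{N−1} ≥ 1 be positive integers. Then (1/η^{N−1}!) · ∏_{a=1}^{N−2} (1/(η^a − η^{a+1})!) · S̄ym^η_s( Y_η(s) ) = ∏_{a=1}^{N−2} G_{η^{a+1}, η^a}( s^{a+1}_1,…,s^{a+1}_{η^{a+1}} ; s^a_1,…,s^a_{η^a} ). -/
open scoped Classical

/-- `W_k(t_1,…,t_k) = ∏_{1≤i<j≤k} (t_i − t_j − 1)/(t_i − t_j)` (0-based indexing,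
variables `t 0, …, t (k-1)`). -/
noncomputable def Wg (k : ℕ) (t : ℕ → ℂ) : ℂ :=
  ∏ i ∈ Finset.range k, ∏ j ∈ Finset.Ioo i k, (t i - t j - 1) / (t i - t j)

/-- The action of a tuple of permutations `σ = (σ_1, …, σ_{N−1})`,
`σ_a ∈ S_{η^a}`, on the collection of variables `s^a_i`. -/
noncomputable def sPerm (N : ℕ) (η : ℕ → ℕ) (s : ℕ → ℕ → ℂ)
    (σ : (a : Fin (N - 1)) → Equiv.Perm (Fin (η a))) : ℕ → ℕ → ℂ :=
  fun a i =>
    if h : a < N - 1 ∧ i < η a then s a ((σ ⟨a, h.1⟩ ⟨i, h.2⟩ : Fin (η a)) : ℕ)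
    else s a i

/-- `Y_η(s)` (0-based: groups `a = 1, …, N−2`). -/
noncomputable def Yfun (N : ℕ) (η : ℕ → ℕ) (s : ℕ → ℕ → ℂ) : ℂ :=
  ∏ a ∈ Finset.Ico 1 (N - 1), ∏ j ∈ Finset.range (η a),
    ((s a j - s (a - 1) (j + (η (a - 1) - η a)))⁻¹ *
      ∏ i ∈ Finset.range j,
        ((s a i - s (a - 1) (j + (η (a - 1) - η a)) + 1) /
          (s a i - s (a - 1) (j + (η (a - 1) - η a)))))

/-- The tuple `z` permuted by `σ ∈ S_r` (acting on the indices `0, …, r−1`). -/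
noncomputable def permOne (r : ℕ) (z : ℕ → ℂ) (σ : Equiv.Perm (Fin r)) : ℕ → ℂ :=
  fun m => if h : m < r then z ((σ ⟨m, h⟩ : Fin r) : ℕ) else z m

/-- `G_{p,r}(y_1,…,y_p; z_1,…,z_r) = (1/(r−p)!) · S̄ym_{z}[ ∏_{i=1}^p
( (1/(y_i − z_{i+r−p})) · ∏_{i<j≤p} (y_i − z_{j+r−p} + 1)/(y_i − z_{j+r−p}) ) ]`,
with 0-based indexing of the variables. -/
noncomputable def G (p r : ℕ) (y z : ℕ → ℂ) : ℂ :=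
  (1 / (Nat.factorial (r - p) : ℂ)) *
    ∑ σ : Equiv.Perm (Fin r),
      (∏ i ∈ Finset.range p, ((y i - permOne r z σ (i + (r - p)))⁻¹ *
        ∏ j ∈ Finset.Ioo i p, ((y i - permOne r z σ (j + (r - p)) + 1) /
          (y i - permOne r z σ (j + (r - p)))))) * Wg r (permOne r z σ)


noncomputable def gg (α β : ℂ → ℂ → ℂ) (i j : ℕ) (a b : ℂ) : ℂ :=
  if i < j then α a b else if i = j then β a b else 1

noncomputable def PP (α β : ℂ → ℂ → ℂ) (n : ℕ) (y u : ℕ → ℂ) : ℂ :=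
  ∏ x ∈ Finset.range n ×ˢ Finset.range n, gg α β x.1 x.2 (y x.1) (u x.2)

theorem gg_row (α β : ℂ → ℂ → ℂ) (n i : ℕ) (hi : i < n) (a : ℂ) (u : ℕ → ℂ) :
    ∏ j ∈ Finset.range n, gg α β i j a (u j)
      = β a (u i) * ∏ j ∈ Finset.Ioo i n, α a (u j) := by
  have h1 : ∏ j ∈ Finset.Ioo i n, α a (u j)
      = ∏ j ∈ Finset.Ioo i n, gg α β i j a (u j) := by
    apply Finset.prod_congr rfl
    intro j hj
    have := Finset.mem_Ioo.1 hj
    simp [gg, this.1]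
  have h2 : β a (u i) = gg α β i i a (u i) := by simp [gg]
  rw [h1, h2, ← Finset.prod_insert (s := Finset.Ioo i n) (f := fun j => gg α β i j a (u j)) (by simp)]
  symm
  apply Finset.prod_subset
  · intro j hj
    simp only [Finset.mem_insert, Finset.mem_Ioo, Finset.mem_range] at *
    omega
  · intro j hj hj'
    simp only [Finset.mem_insert, Finset.mem_Ioo, Finset.mem_range] at *
    unfold gg
    rw [if_neg (by omega), if_neg (by omega)]

theorem gg_col (α β : ℂ → ℂ → ℂ) (n j : ℕ) (hj : j < n) (y : ℕ → ℂ) (b : ℂ) :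
    ∏ i ∈ Finset.range n, gg α β i j (y i) b
      = β (y j) b * ∏ i ∈ Finset.range j, α (y i) b := by
  have h1 : ∏ i ∈ Finset.range j, α (y i) b
      = ∏ i ∈ Finset.range j, gg α β i j (y i) b := by
    apply Finset.prod_congr rfl
    intro i hi
    have := Finset.mem_range.1 hi
    simp [gg, this]
  have h2 : β (y j) b = gg α β j j (y j) b := by simp [gg]
  rw [h1, h2, ← Finset.prod_insert (s := Finset.range j) (f := fun i => gg α β i j (y i) b) (by simp)]
  symm
  apply Finset.prod_subset
  · intro i hi
    simp only [Finset.mem_insert, Finset.mem_range] at *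
    omega
  · intro i hi hi'
    simp only [Finset.mem_insert, Finset.mem_range] at *
    unfold gg
    rw [if_neg (by omega), if_neg (by omega)]

theorem PP_row (α β : ℂ → ℂ → ℂ) (n : ℕ) (y u : ℕ → ℂ) :
    PP α β n y u = ∏ i ∈ Finset.range n, (β (y i) (u i) * ∏ j ∈ Finset.Ioo i n, α (y i) (u j)) := by
  unfold PP
  rw [Finset.prod_product]
  apply Finset.prod_congr rfl
  intro i hi
  exact gg_row α β n i (Finset.mem_range.1 hi) (y i) u

theorem PP_col (α β : ℂ → ℂ → ℂ) (n : ℕ) (y u : ℕ → ℂ) :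
    PP α β n y u = ∏ j ∈ Finset.range n, (β (y j) (u j) * ∏ i ∈ Finset.range j, α (y i) (u j)) := by
  unfold PP
  rw [Finset.prod_product_right]
  apply Finset.prod_congr rfl
  intro i hi
  exact gg_col α β n i (Finset.mem_range.1 hi) y (u i)

theorem PP_split (α β : ℂ → ℂ → ℂ) (n k : ℕ) (hk : k + 1 < n) :
    ∃ A : (ℕ → ℂ) → (ℕ → ℂ) → ℂ,
      (∀ y u, PP α β n y u = A y u *
        (α (y k) (u (k+1)) * β (y k) (u k) * β (y (k+1)) (u (k+1)))) ∧
      (∀ y u, A (y ∘ Equiv.swap k (k+1)) u = A y u) ∧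
      (∀ y u, A y (u ∘ Equiv.swap k (k+1)) = A y u) := by
  have hlt : ∀ i, Equiv.swap k (k+1) i < n ↔ i < n := by
    intro i
    rw [Equiv.swap_apply_def]
    split_ifs <;> omega
  have hK : ∀ i, (Equiv.swap k (k+1) i = k ∨ Equiv.swap k (k+1) i = k+1) ↔ (i = k ∨ i = k+1) := by
    intro i
    rw [Equiv.swap_apply_def]
    split_ifs <;> omega
  refine ⟨fun y u => ∏ x ∈ (Finset.range n ×ˢ Finset.range n).filter
    (fun x => ¬ ((x.1 = k ∨ x.1 = k+1) ∧ (x.2 = k ∨ x.2 = k+1))),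
      gg α β x.1 x.2 (y x.1) (u x.2), ?_, ?_, ?_⟩
  · intro y u
    unfold PP
    rw [← Finset.prod_filter_not_mul_prod_filter _
      (fun x : ℕ × ℕ => (x.1 = k ∨ x.1 = k+1) ∧ (x.2 = k ∨ x.2 = k+1))]
    congr 1
    have : (Finset.range n ×ˢ Finset.range n).filter
        (fun x : ℕ × ℕ => (x.1 = k ∨ x.1 = k+1) ∧ (x.2 = k ∨ x.2 = k+1))
        = ({k, k+1} : Finset ℕ) ×ˢ ({k, k+1} : Finset ℕ) := by
      ext ⟨i, j⟩
      simp only [Finset.mem_filter, Finset.mem_product, Finset.mem_range, Finset.mem_insert,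
        Finset.mem_singleton]
      omega
    rw [this, Finset.prod_product, Finset.prod_pair (by omega), Finset.prod_pair (by omega),
      Finset.prod_pair (by omega)]
    simp only [gg, lt_self_iff_false, if_true, if_false]
    rw [if_pos (by omega), if_neg (by omega), if_neg (by omega)]
    ring
  · intro y u
    apply Finset.prod_equiv ((Equiv.swap k (k+1)).prodCongr (Equiv.refl ℕ))
    · rintro ⟨i, j⟩
      simp [hlt, hK]
    · rintro ⟨i, j⟩ h
      simp only [Finset.mem_filter, Finset.mem_product, Finset.mem_range] at h
      simp only [Equiv.prodCongr_apply, Prod.map, Function.comp, Equiv.refl_apply]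
      have h1 : Equiv.swap k (k+1) i < j ↔ i < j := by
        rw [Equiv.swap_apply_def]; split_ifs <;> omega
      have h2 : Equiv.swap k (k+1) i = j ↔ i = j := by
        rw [Equiv.swap_apply_def]; split_ifs <;> omega
      simp only [gg, h1, h2]
  · intro y u
    apply Finset.prod_equiv ((Equiv.refl ℕ).prodCongr (Equiv.swap k (k+1)))
    · rintro ⟨i, j⟩
      simp only [Finset.mem_filter, Finset.mem_product, Finset.mem_range,
        Equiv.prodCongr_apply, Prod.map, Equiv.refl_apply, hlt, hK]
    · rintro ⟨i, j⟩ h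
      simp only [Finset.mem_filter, Finset.mem_product, Finset.mem_range] at h
      simp only [Equiv.prodCongr_apply, Prod.map, Function.comp, Equiv.refl_apply]
      have h1 : i < Equiv.swap k (k+1) j ↔ i < j := by
        rw [Equiv.swap_apply_def]; split_ifs <;> omega
      have h2 : i = Equiv.swap k (k+1) j ↔ i = j := by
        rw [Equiv.swap_apply_def]; split_ifs <;> omega
      simp only [gg, h1, h2]

theorem sum_pi_chain (m : ℕ) : ∀ (P : Fin (m+1) → Type) [∀ a, Fintype (P a)]
    (f : (a : Fin m) → P a.succ → P a.castSucc → ℂ) (w : P (Fin.last m) → ℂ)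
    (c : Fin m → ℂ) (d : ℂ) (_ : ∀ a y, ∑ x, f a y x = c a) (_ : ∑ x, w x = d),
    ∑ σ : (a : Fin (m+1)) → P a, (∏ a : Fin m, f a (σ a.succ) (σ a.castSucc)) * w (σ (Fin.last m))
      = d * ∏ a, c a := by
  induction m with
  | zero =>
    intro P _ f w c d hf hw
    rw [← Fintype.sum_equiv (Fin.consEquiv P) (fun x => w x.1) _ (by intro x; simp)]
    rw [Fintype.sum_prod_type]
    simp
    exact hw
  | succ m ih =>
    intro P _ f w c d hf hw
    rw [← Fintype.sum_equiv (Fin.consEquiv P)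
      (fun x => f 0 (x.2 0) x.1 * ((∏ a : Fin m, f a.succ (x.2 a.succ) (x.2 a.castSucc)) * w (x.2 (Fin.last m)))) _
      (by
        intro x
        rw [Fin.prod_univ_succ, mul_assoc]
        rfl)]
    rw [Fintype.sum_prod_type_right]
    have h0 : ∀ (y : P (Fin.succ 0)) (K : ℂ), ∑ x : P 0, f 0 y x * K = c 0 * K := by
      intro y K
      exact (Finset.sum_mul _ _ _).symm.trans (congrArg (· * K) (hf 0 y))
    refine (Finset.sum_congr rfl (fun (y : (a : Fin (m+1)) → P a.succ) _ => h0 (y 0) ((∏ a : Fin m, f a.succ (y a.succ) (y a.castSucc)) * w (y (Fin.last m))))).trans ?_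
    rw [← Finset.mul_sum, ih (fun a => P a.succ) (fun a => f a.succ) w (fun a => c a.succ) d
      (fun a y => hf a.succ y) hw, Fin.prod_univ_succ]
    ring

theorem sum_lagrange (s : Finset ℕ) (t : ℕ → ℂ) (hs : 0 < s.card) (ht : Set.InjOn t s) :
    ∑ m ∈ s, ∏ j ∈ s.erase m, (t m - t j - 1) / (t m - t j) = s.card := by
  open Polynomial in
  let p : ℂ[X] := ∏ j ∈ s, (X - C (t j + 1))
  let q : ℂ[X] := ∏ j ∈ s, (X - C (t j))
  have hp : p.degree = s.card := by simp only [p, Polynomial.degree_prod, Polynomial.degree_X_sub_C]; simp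
  have hq : q.degree = s.card := by simp [q, Polynomial.degree_prod]
  have hpm : p.Monic := Polynomial.monic_prod_of_monic _ _ fun i _ => Polynomial.monic_X_sub_C _
  have hqm : q.Monic := Polynomial.monic_prod_of_monic _ _ fun i _ => Polynomial.monic_X_sub_C _
  have hd : (p - q).degree < s.card := by
    rw [← hp]
    exact Polynomial.degree_sub_lt_left (by rw [hp, hq]) hpm.ne_zero
      (by rw [hpm.leadingCoeff, hqm.leadingCoeff])
  have h := Lagrange.coeff_eq_sum ht hd
  rw [Polynomial.coeff_sub, Polynomial.prod_X_sub_C_coeff_card_pred _ _ hs,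
    Polynomial.prod_X_sub_C_coeff_card_pred _ _ hs] at h
  have h2 : ∀ m ∈ s, (p - q).eval (t m) / ∏ j ∈ s.erase m, (t m - t j)
      = - ∏ j ∈ s.erase m, (t m - t j - 1) / (t m - t j) := by
    intro m hm
    have e1 : p.eval (t m) = - ∏ j ∈ s.erase m, (t m - t j - 1) := by
      simp only [p, Polynomial.eval_prod]
      rw [← Finset.mul_prod_erase _ _ hm]
      simp [sub_sub]
    have e2 : q.eval (t m) = 0 := by
      simp only [q, Polynomial.eval_prod]
      exact Finset.prod_eq_zero hm (by simp)
    rw [Polynomial.eval_sub, e1, e2, Finset.prod_div_distrib]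
    ring
  rw [Finset.sum_congr rfl h2] at h
  rw [Finset.sum_add_distrib, Finset.sum_neg_distrib] at h
  simp only [Finset.sum_const, nsmul_eq_mul, mul_one] at h
  linear_combination h

theorem Wg_succ (k : ℕ) (t : ℕ → ℂ) :
    Wg (k+1) t = (∏ j ∈ Finset.range k, (t 0 - t (j+1) - 1) / (t 0 - t (j+1)))
      * Wg k (fun i => t (i+1)) := by
  unfold Wg
  rw [Finset.prod_range_succ', mul_comm]
  congr 1
  · have : Finset.Ioo 0 (k+1) = (Finset.range k).image (· + 1) := by
      ext x
      simp only [Finset.mem_Ioo, Finset.mem_image, Finset.mem_range]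
      constructor
      · intro h; exact ⟨x - 1, by omega, by omega⟩
      · rintro ⟨y, h, rfl⟩; omega
    rw [this, Finset.prod_image (by intro a _ b _ h; simpa using h)]
  · apply Finset.prod_congr rfl
    intro i hi
    have : Finset.Ioo (i+1) (k+1) = (Finset.Ioo i k).image (· + 1) := by
      ext x
      simp only [Finset.mem_Ioo, Finset.mem_image]
      constructor
      · intro h; exact ⟨x - 1, by omega, by omega⟩
      · rintro ⟨y, h, rfl⟩; omega
    rw [this, Finset.prod_image (by intro a _ b _ h; simpa using h)]

theorem permOne_prod (k : ℕ) (t : ℕ → ℂ) (e : Equiv.Perm (Fin k)) (f : ℂ → ℂ) :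
    ∏ j ∈ Finset.range k, f (permOne k t e j) = ∏ j ∈ Finset.range k, f (t j) := by
  rw [Finset.prod_range, Finset.prod_range]
  rw [← Equiv.prod_comp e (fun j : Fin k => f (t j))]
  apply Finset.prod_congr rfl
  intro i _
  simp [permOne]

theorem permOne_decompose_zero (k : ℕ) (t : ℕ → ℂ) (p : Fin (k+1)) (e : Equiv.Perm (Fin k)) :
    permOne (k+1) t (Equiv.Perm.decomposeFin.symm (p, e)) 0 = t p := by
  unfold permOne
  rw [dif_pos (by omega)]
  congr 2
  exact Equiv.Perm.decomposeFin_symm_apply_zero p e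

theorem permOne_decompose_succ (k : ℕ) (t : ℕ → ℂ) (p : Fin (k+1)) (e : Equiv.Perm (Fin k)) (i : ℕ) :
    permOne (k+1) t (Equiv.Perm.decomposeFin.symm (p, e)) (i+1)
      = permOne k (fun j => t (Equiv.swap 0 (p : ℕ) (j+1))) e i := by
  unfold permOne
  by_cases h : i < k
  · rw [dif_pos (by omega), dif_pos h]
    congr 1
    have := Equiv.Perm.decomposeFin_symm_apply_succ e p ⟨i, h⟩
    have h2 : (⟨i+1, by omega⟩ : Fin (k+1)) = Fin.succ ⟨i, h⟩ := rfl
    rw [h2, this, Equiv.swap_apply_def, Equiv.swap_apply_def]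
    simp only [Fin.ext_iff, Fin.val_succ, Fin.val_zero]
    split_ifs <;> simp only [Fin.val_succ, Fin.val_zero]
  · rw [dif_neg (by omega), dif_neg h]
    congr 1
    rw [Equiv.swap_apply_of_ne_of_ne] <;> omega

theorem sum_Wg (k : ℕ) : ∀ (t : ℕ → ℂ) (_ : ∀ i < k, ∀ j < k, i ≠ j → t i ≠ t j),
    ∑ σ : Equiv.Perm (Fin k), Wg k (permOne k t σ) = (Nat.factorial k : ℂ) := by
  induction k with
  | zero => intro t _; simp [Wg]
  | succ k ih =>
    intro t ht
    rw [← Fintype.sum_equiv (Equiv.Perm.decomposeFin (n := k)).symm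
      (fun x => (∏ j ∈ (Finset.range (k+1)).erase x.1, (t x.1 - t j - 1) / (t x.1 - t j)) *
        Wg k (permOne k (fun j => t (Equiv.swap 0 (x.1 : ℕ) (j+1))) x.2)) _ ?_]
    · rw [Fintype.sum_prod_type]
      simp only [← Finset.mul_sum]
      have : ∀ p : Fin (k+1), ∑ e : Equiv.Perm (Fin k),
          Wg k (permOne k (fun j => t (Equiv.swap 0 (p : ℕ) (j+1))) e) = (Nat.factorial k : ℂ) := by
        intro p
        apply ih
        intro i hi j hj hij
        apply ht
        · rw [Equiv.swap_apply_def]; split_ifs <;> omega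
        · rw [Equiv.swap_apply_def]; split_ifs <;> omega
        · intro h
          have := (Equiv.swap 0 (p : ℕ)).injective h
          omega
      simp only [this]
      rw [← Finset.sum_mul, ← Finset.sum_range (fun p => ∏ j ∈ (Finset.range (k+1)).erase p, (t p - t j - 1) / (t p - t j)),
        sum_lagrange _ t (by simp) (by
          intro a ha b hb hab
          by_contra hne
          exact ht a (by simpa using ha) b (by simpa using hb) hne hab)]
      rw [Nat.factorial_succ]
      simp
    · rintro ⟨p, e⟩
      rw [Wg_succ]
      simp only [permOne_decompose_zero, permOne_decompose_succ]
      congr 1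
      rw [permOne_prod k _ e (fun x => (t p - x - 1) / (t p - x))]
      symm
      apply Finset.prod_bij (fun j _ => Equiv.swap 0 (p : ℕ) (j+1))
      · intro j hj
        have := Finset.mem_range.1 hj
        rw [Finset.mem_erase, Finset.mem_range]
        constructor
        · intro h
          have h' : Equiv.swap 0 (p : ℕ) (j+1) = Equiv.swap 0 (p : ℕ) 0 := by
            rw [Equiv.swap_apply_left]; exact h
          have := (Equiv.swap 0 (p : ℕ)).injective h'
          omega
        · rw [Equiv.swap_apply_def]; split_ifs <;> omega
      · intro a _ b _ h
        have := (Equiv.swap 0 (p : ℕ)).injective h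
        omega
      · intro b hb
        rw [Finset.mem_erase, Finset.mem_range] at hb
        have hne : Equiv.swap 0 (p : ℕ) b ≠ 0 := by
          rw [Equiv.swap_apply_def]; split_ifs <;> omega
        have hlt : Equiv.swap 0 (p : ℕ) b < k + 1 := by
          rw [Equiv.swap_apply_def]; split_ifs <;> omega
        refine ⟨Equiv.swap 0 (p : ℕ) b - 1, by rw [Finset.mem_range]; omega, ?_⟩
        rw [Nat.sub_add_cancel (by omega), Equiv.swap_apply_self]
      · intro j _; rfl

noncomputable def FF (p r : ℕ) (y z : ℕ → ℂ) : ℂ :=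
  PP (fun a b => (a - b + 1) / (a - b)) (fun a b => (a - b)⁻¹) p y (fun j => z (j + (r - p)))

noncomputable def TT (p r : ℕ) (y z : ℕ → ℂ) : ℂ :=
  ∑ σ : Equiv.Perm (Fin r), FF p r y (permOne r z σ) * Wg r (permOne r z σ)

theorem Wg_eq_PP (r : ℕ) (z : ℕ → ℂ) :
    Wg r z = PP (fun a b => (a - b - 1) / (a - b)) (fun _ _ => 1) r z z := by
  rw [PP_row]
  simp [Wg]

theorem G_eq_TT (p r : ℕ) (y z : ℕ → ℂ) :
    G p r y z = (1 / (Nat.factorial (r - p) : ℂ)) * TT p r y z := by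
  unfold G TT FF
  simp only [PP_row]

theorem anti_swap (p r k : ℕ) (hpr : p ≤ r) (hk : k + 1 < p) (y z : ℕ → ℂ)
    (h : ∀ i < p, ∀ j < r, y i ≠ z j) :
    (FF p r (y ∘ Equiv.swap k (k+1)) (z ∘ Equiv.swap (k + (r-p)) (k + (r-p) + 1))
      - FF p r y (z ∘ Equiv.swap (k + (r-p)) (k + (r-p) + 1)))
        * Wg r (z ∘ Equiv.swap (k + (r-p)) (k + (r-p) + 1))
    = - ((FF p r (y ∘ Equiv.swap k (k+1)) z - FF p r y z) * Wg r z) := by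
  have hcomp : (fun j => (z ∘ Equiv.swap (k + (r-p)) (k + (r-p) + 1)) (j + (r - p)))
      = (fun j => z (j + (r - p))) ∘ Equiv.swap k (k+1) := by
    funext j
    simp only [Function.comp]
    congr 1
    rw [Equiv.swap_apply_def, Equiv.swap_apply_def]
    split_ifs <;> omega
  obtain ⟨A, hA, hA1, hA2⟩ := PP_split (fun a b : ℂ => (a - b + 1) / (a - b))
    (fun a b => (a - b)⁻¹) p k hk
  obtain ⟨B, hB, hB1, hB2⟩ := PP_split (fun a b : ℂ => (a - b - 1) / (a - b))
    (fun _ _ => 1) r (k + (r - p)) (by omega)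
  simp only [Wg_eq_PP]
  unfold FF
  rw [hcomp]
  simp only [hA, hB, hA1, hA2, hB1, hB2]
  simp only [Function.comp, Equiv.swap_apply_left, Equiv.swap_apply_right]
  have e : k + 1 + (r - p) = k + (r - p) + 1 := by omega
  simp only [e]
  have h1 := sub_ne_zero.2 (h k (by omega) (k + (r - p)) (by omega))
  have h2 := sub_ne_zero.2 (h k (by omega) (k + (r - p) + 1) (by omega))
  have h3 := sub_ne_zero.2 (h (k+1) (by omega) (k + (r - p)) (by omega))
  have h4 := sub_ne_zero.2 (h (k+1) (by omega) (k + (r - p) + 1) (by omega))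
  generalize A y _ = A0
  generalize B z z = B0
  generalize y k = y1 at *
  generalize y (k+1) = y2 at *
  generalize z (k + (r - p)) = z1 at *
  generalize z (k + (r - p) + 1) = z2 at *
  have key : ∀ a b : ℂ, y1 - a ≠ 0 → y1 - b ≠ 0 → y2 - a ≠ 0 → y2 - b ≠ 0 →
      (y2 - b + 1) / (y2 - b) * (y2 - a)⁻¹ * (y1 - b)⁻¹
        - (y1 - b + 1) / (y1 - b) * (y1 - a)⁻¹ * (y2 - b)⁻¹
      = (y1 - y2) * (a - b + 1) / ((y1 - a) * (y1 - b) * (y2 - a) * (y2 - b)) := by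
    intro a b ha hb hc hd
    field_simp
    ring
  have k1 := key z1 z2 h1 h2 h3 h4
  have k2 := key z2 z1 h2 h1 h4 h3
  rw [← mul_sub, ← mul_sub, k1, k2]
  have e3 : (z2 - z1 - 1) / (z2 - z1) = (z1 - z2 + 1) / (z1 - z2) := by
    rw [← neg_div_neg_eq]; congr 1 <;> ring
  rw [e3]
  ring

theorem permOne_mul_swap (r k : ℕ) (z : ℕ → ℂ) (σ : Equiv.Perm (Fin r)) (h1 : k < r) (h : k + 1 < r) :
    permOne r z (σ * Equiv.swap ⟨k, h1⟩ ⟨k+1, h⟩) = permOne r z σ ∘ Equiv.swap k (k+1) := by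
  funext m
  have hlt : Equiv.swap k (k+1) m < r ↔ m < r := by
    rw [Equiv.swap_apply_def]; split_ifs <;> omega
  simp only [permOne, Function.comp]
  by_cases hm : m < r
  · rw [dif_pos hm, dif_pos (hlt.2 hm)]
    congr 2
    rw [Equiv.Perm.mul_apply]
    congr 1
    apply Fin.ext
    simp only [Equiv.swap_apply_def, Fin.ext_iff]
    split_ifs <;> rfl
  · rw [dif_neg hm, dif_neg (by rwa [hlt])]
    congr 1
    rw [Equiv.swap_apply_of_ne_of_ne] <;> omega

theorem permOne_range (r : ℕ) (z : ℕ → ℂ) (σ : Equiv.Perm (Fin r)) (j : ℕ) (hj : j < r) :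
    ∃ j' < r, permOne r z σ j = z j' := by
  refine ⟨σ ⟨j, hj⟩, (σ ⟨j, hj⟩).2, ?_⟩
  simp [permOne, hj]

theorem TT_swap (p r k : ℕ) (hpr : p ≤ r) (hk : k + 1 < p) (y z : ℕ → ℂ)
    (h : ∀ i < p, ∀ j < r, y i ≠ z j) :
    TT p r (y ∘ Equiv.swap k (k+1)) z = TT p r y z := by
  have hs : ∑ σ : Equiv.Perm (Fin r), (FF p r (y ∘ Equiv.swap k (k+1)) (permOne r z σ)
      - FF p r y (permOne r z σ)) * Wg r (permOne r z σ) = 0 := by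
    rw [← self_eq_neg]
    conv_lhs => rw [← Equiv.sum_comp (Equiv.mulRight (Equiv.swap
      (⟨k + (r-p), by omega⟩ : Fin r) ⟨k + (r-p) + 1, by omega⟩))]
    rw [← Finset.sum_neg_distrib]
    apply Finset.sum_congr rfl
    intro σ _
    rw [Equiv.coe_mulRight, permOne_mul_swap]
    apply anti_swap p r k hpr hk
    intro i hi j hj
    obtain ⟨j', hj', e⟩ := permOne_range r z σ j hj
    rw [e]
    exact h i hi j' hj'
  rw [← sub_eq_zero, ← hs]
  unfold TT
  rw [← Finset.sum_sub_distrib]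
  apply Finset.sum_congr rfl
  intro σ _
  ring

theorem TT_perm (p r : ℕ) (hpr : p ≤ r) (y z : ℕ → ℂ)
    (h : ∀ i < p, ∀ j < r, y i ≠ z j) (σ : Equiv.Perm (Fin p)) :
    TT p r (permOne p y σ) z = TT p r y z := by
  have h1 : permOne p y 1 = y := by
    funext m; simp [permOne]
  cases p with
  | zero =>
    rw [Subsingleton.elim σ 1, h1]
  | succ n =>
    have hσ : σ ∈ Submonoid.closure (Set.range fun i : Fin n ↦ Equiv.swap i.castSucc i.succ) := by
      rw [Equiv.Perm.mclosure_swap_castSucc_succ]; trivial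
    induction hσ using Submonoid.closure_induction_right with
    | one => rw [h1]
    | mul_right x hx t ht ih =>
      obtain ⟨i, rfl⟩ := ht
      have e := permOne_mul_swap (n+1) i y x (by omega) (by omega)
      have e' : permOne (n+1) y (x * Equiv.swap i.castSucc i.succ)
        = permOne (n+1) y x ∘ Equiv.swap (i : ℕ) (i+1) := e
      change TT (n+1) r (permOne (n+1) y (x * Equiv.swap i.castSucc i.succ)) z = _
      rw [e', TT_swap (n+1) r i hpr (by omega) _ _ ?_, ih]
      intro a ha j hj
      obtain ⟨a', ha', e⟩ := permOne_range (n+1) y x a ha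
      rw [e]
      exact h a' ha' j hj

theorem sPerm_eq (N : ℕ) (η : ℕ → ℕ) (s : ℕ → ℕ → ℂ)
    (σ : (a : Fin (N - 1)) → Equiv.Perm (Fin (η a))) (a : ℕ) (ha : a < N - 1) :
    sPerm N η s σ a = permOne (η a) (s a) (σ ⟨a, ha⟩) := by
  funext i
  unfold sPerm permOne
  by_cases h : i < η a
  · rw [dif_pos ⟨ha, h⟩, dif_pos h]
  · rw [dif_neg (fun h' => h h'.2), dif_neg h]

theorem Yfun_eq (m : ℕ) (η : ℕ → ℕ) (s : ℕ → ℕ → ℂ) :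
    Yfun (m+2) η s = ∏ a ∈ Finset.range m, FF (η (a+1)) (η a) (s (a+1)) (s a) := by
  unfold Yfun FF
  rw [Finset.prod_Ico_eq_prod_range]
  simp only [PP_col]
  apply Finset.prod_congr (by simp)
  intro a _
  simp only [add_comm 1 a, Nat.add_sub_cancel]

/-- `(1/η^{N−1}!) · ∏_{a=1}^{N−2} 1/(η^a − η^{a+1})! · S̄ym^η_s(Y_η(s))
= ∏_{a=1}^{N−2} G_{η^{a+1}, η^a}(s^{a+1}; s^a)`. -/
theorem symY_eq_prod_G (N : ℕ) (hN : 2 ≤ N) (η : ℕ → ℕ)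
    (hmono : ∀ a, a + 1 < N - 1 → η (a + 1) ≤ η a)
    (hpos : 1 ≤ η (N - 2))
    (s : ℕ → ℕ → ℂ)
    (hinj : ∀ a < N - 1, ∀ i < η a, ∀ j < η a, i ≠ j → s a i ≠ s a j)
    (hcross : ∀ a, 1 ≤ a → a < N - 1 → ∀ i < η a, ∀ j < η (a - 1), s a i ≠ s (a - 1) j) :
    (1 / (Nat.factorial (η (N - 2)) : ℂ)) *
      (∏ a ∈ Finset.range (N - 2), (1 / (Nat.factorial (η a - η (a + 1)) : ℂ))) *
      (∑ σ : (a : Fin (N - 1)) → Equiv.Perm (Fin (η a)),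
        Yfun N η (sPerm N η s σ) *
          ∏ a ∈ Finset.range (N - 1), Wg (η a) (fun i => sPerm N η s σ a i)) =
    ∏ a ∈ Finset.range (N - 2), G (η (a + 1)) (η a) (s (a + 1)) (s a) := by
  obtain ⟨m, rfl⟩ : ∃ m, N = m + 2 := ⟨N - 2, by omega⟩
  change (1 / (Nat.factorial (η m) : ℂ)) *
      (∏ a ∈ Finset.range m, (1 / (Nat.factorial (η a - η (a + 1)) : ℂ))) *
      (∑ σ : (a : Fin (m + 1)) → Equiv.Perm (Fin (η a)),
        Yfun (m + 2) η (sPerm (m + 2) η s σ) *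
          ∏ a ∈ Finset.range (m + 1), Wg (η a) (fun i => sPerm (m + 2) η s σ a i)) =
    ∏ a ∈ Finset.range m, G (η (a + 1)) (η a) (s (a + 1)) (s a)
  have hmain := sum_pi_chain m (fun a => Equiv.Perm (Fin (η a)))
    (fun a τ ρ => FF (η (a+1)) (η a) (permOne (η (a+1)) (s (a+1)) τ) (permOne (η a) (s a) ρ)
      * Wg (η a) (permOne (η a) (s a) ρ))
    (fun τ => Wg (η m) (permOne (η m) (s m) τ))
    (fun a => TT (η (a+1)) (η a) (s (a+1)) (s a)) (Nat.factorial (η m) : ℂ)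
    (by
      intro a τ
      exact TT_perm (η (a+1)) (η a) (hmono a (by omega)) (s (a+1)) (s a)
        (hcross (a+1) (by omega) (by omega)) τ)
    (sum_Wg (η m) (s m) (hinj m (by omega)))
  have hsum : (∑ σ : (a : Fin (m + 1)) → Equiv.Perm (Fin (η a)),
        Yfun (m + 2) η (sPerm (m + 2) η s σ) *
          ∏ a ∈ Finset.range (m + 1), Wg (η a) (fun i => sPerm (m + 2) η s σ a i))
      = (Nat.factorial (η m) : ℂ) * ∏ a : Fin m, TT (η (a+1)) (η a) (s (a+1)) (s a) := by
    rw [← hmain]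
    apply Finset.sum_congr rfl
    intro σ _
    rw [Yfun_eq, Finset.prod_range_succ, ← mul_assoc, ← Finset.prod_mul_distrib,
      Finset.prod_range]
    congr 1
    · apply Finset.prod_congr rfl
      intro a _
      rw [sPerm_eq (m+2) η s σ a (by omega), sPerm_eq (m+2) η s σ (a+1) (by omega)]
      rfl
    · rw [sPerm_eq (m+2) η s σ m (by omega)]
      rfl
  rw [hsum, ← Finset.prod_range (fun a => TT (η (a+1)) (η a) (s (a+1)) (s a))]
  simp only [G_eq_TT]
  rw [Finset.prod_mul_distrib]
  have hne : (Nat.factorial (η m) : ℂ) ≠ 0 := by exact_mod_cast Nat.factorial_ne_zero _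
  field_simp
end

section
/- Let N ≥ 2 and let η^1 ≥ η^2 ≥ … ≥ η^{N−1} ≥ 1 be positive integers. Then Σ_l S̄ym^{η̈}_{s̈}( F_l(s) ) = ∏_{a=1}^{N−2} G_{η^{a+1}, η^a}( s^{a+1}_1,…,s^{a+1}_{η^{a+1}} ; s^a_1,…,s^a_{η^a} ), where the sum is taken over all collections l of integers l^a_i (a = 1,…,N−2, i = 1,…,η^{a+1}) with 1 ≤ l^a_1 < l^a_2 < … < l^a_{η^{a+1}} ≤ η^a for each a. -/
open scoped Classical

/-- `F_l(s)` (0-based: `a = 0, …, N−3`). -/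
noncomputable def Ffun (N : ℕ) (η : ℕ → ℕ)
    (l : (a : Fin (N - 1 - 1)) → Fin (η ((a : ℕ) + 1)) → Fin (η (a : ℕ)))
    (s : ℕ → ℕ → ℂ) : ℂ :=
  ∏ a : Fin (N - 1 - 1), ∏ i : Fin (η ((a : ℕ) + 1)),
    ((s ((a : ℕ) + 1) (i : ℕ) - s (a : ℕ) ((l a i : ℕ)))⁻¹ *
      ∏ j ∈ Finset.Ioo ((l a i : ℕ)) (η (a : ℕ)),
        ((s ((a : ℕ) + 1) (i : ℕ) - s (a : ℕ) j + 1) /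
          (s ((a : ℕ) + 1) (i : ℕ) - s (a : ℕ) j)))

/-- Partial fractions. -/
theorem pfrac (S : Finset ℂ) (c : ℂ → ℂ) (x : ℂ) (hx : x ∉ S) :
    ∏ u ∈ S, (1 + c u * (x - u)⁻¹) =
      1 + ∑ m ∈ S, c m * (x - m)⁻¹ * ∏ u ∈ S.erase m, (1 + c u * (m - u)⁻¹) := by
  induction S using Finset.induction_on generalizing x with
  | empty => simp
  | insert a S ha ih =>
    have hxa : x - a ≠ 0 := by
      intro h; apply hx; rw [sub_eq_zero.mp h]; simp
    have hxS : x ∉ S := fun h => hx (Finset.mem_insert_of_mem h)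
    rw [Finset.prod_insert ha, Finset.sum_insert ha, Finset.erase_insert ha, ih x hxS, ih a ha]
    have : ∀ m ∈ S, c m * (x - m)⁻¹ * ∏ u ∈ (insert a S).erase m, (1 + c u * (m - u)⁻¹)
        = (c m * (x - m)⁻¹ * ∏ u ∈ S.erase m, (1 + c u * (m - u)⁻¹)) * (1 + c a * (x - a)⁻¹)
          - c a * (x - a)⁻¹ * (c m * (a - m)⁻¹ * ∏ u ∈ S.erase m, (1 + c u * (m - u)⁻¹)) := by
      intro m hm
      have hma : m ≠ a := by rintro rfl; exact ha hm
      have hxm : x ≠ m := by rintro rfl; exact hxS hm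
      rw [Finset.erase_insert_of_ne hma.symm, Finset.prod_insert (by simp [ha])]
      generalize ∏ u ∈ S.erase m, (1 + c u * (m - u)⁻¹) = P
      have h1 : m - a ≠ 0 := sub_ne_zero.mpr hma
      have h2 : x - m ≠ 0 := sub_ne_zero.mpr hxm
      have h3 : a - m ≠ 0 := sub_ne_zero.mpr hma.symm
      have e : (x - m)⁻¹ * (m - a)⁻¹ = (x - m)⁻¹ * (x - a)⁻¹ - (x - a)⁻¹ * (a - m)⁻¹ := by
        have : a - m = - (m - a) := by ring
        rw [this]
        field_simp
        ring
      linear_combination (c m * c a * P) * e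
    rw [Finset.sum_congr rfl this, Finset.sum_sub_distrib, ← Finset.sum_mul, ← Finset.mul_sum]
    ring

theorem pfrac2 (S : Finset ℂ) (c : ℂ → ℂ) (x z : ℂ) (hx : x ∉ S) (hz : z ∉ S) (hxz : x ≠ z) :
    (x - z)⁻¹ * ∏ u ∈ S, (1 + c u * (x - u)⁻¹) =
      (x - z)⁻¹ * ∏ u ∈ S, (1 + c u * (z - u)⁻¹) +
       ∑ m ∈ S, c m * (x - m)⁻¹ * (m - z)⁻¹ * ∏ u ∈ S.erase m, (1 + c u * (m - u)⁻¹) := by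
  rw [pfrac S c x hx, pfrac S c z hz]
  have : ∀ m ∈ S, c m * (x - m)⁻¹ * (m - z)⁻¹ * ∏ u ∈ S.erase m, (1 + c u * (m - u)⁻¹)
      = (x - z)⁻¹ * (c m * (x - m)⁻¹ * ∏ u ∈ S.erase m, (1 + c u * (m - u)⁻¹))
       - (x - z)⁻¹ * (c m * (z - m)⁻¹ * ∏ u ∈ S.erase m, (1 + c u * (m - u)⁻¹)) := by
    intro m hm
    have hmz : m ≠ z := by rintro rfl; exact hz hm
    have hxm : x ≠ m := by rintro rfl; exact hx hm
    generalize ∏ u ∈ S.erase m, (1 + c u * (m - u)⁻¹) = P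
    have h1 : m - z ≠ 0 := sub_ne_zero.mpr hmz
    have h2 : x - m ≠ 0 := sub_ne_zero.mpr hxm
    have h3 : x - z ≠ 0 := sub_ne_zero.mpr hxz
    have e : (x - m)⁻¹ * (m - z)⁻¹ = (x - z)⁻¹ * (x - m)⁻¹ - (x - z)⁻¹ * (z - m)⁻¹ := by
      have : z - m = - (m - z) := by ring
      rw [this]
      field_simp
      ring
    linear_combination (c m * P) * e
  rw [Finset.sum_congr rfl this, Finset.sum_sub_distrib, ← Finset.mul_sum, ← Finset.mul_sum]
  ring

theorem sum_prod_card (Z : Finset ℂ) :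
    ∑ m ∈ Z, ∏ u ∈ Z.erase m, (1 + (m - u)⁻¹) = (Z.card : ℂ) := by
  induction Z using Finset.induction_on with
  | empty => simp
  | insert a S ha ih =>
    rw [Finset.sum_insert ha, Finset.erase_insert ha, Finset.card_insert_of_notMem ha]
    have h := pfrac S (fun _ => 1) a ha
    simp only [one_mul] at h
    rw [h]
    have : ∀ m ∈ S, ∏ u ∈ (insert a S).erase m, (1 + (m - u)⁻¹)
        = ∏ u ∈ S.erase m, (1 + (m - u)⁻¹) - (a - m)⁻¹ * ∏ u ∈ S.erase m, (1 + (m - u)⁻¹) := by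
      intro m hm
      have hma : m ≠ a := by rintro rfl; exact ha hm
      rw [Finset.erase_insert_of_ne hma.symm, Finset.prod_insert (by simp [ha])]
      have : m - a = - (a - m) := by ring
      rw [this, inv_neg]; ring
    rw [Finset.sum_congr rfl this, Finset.sum_sub_distrib, ih]
    push_cast; ring

noncomputable def cc (Y : Finset ℂ) (k : ℂ) : ℂ := ∏ i ∈ Y.erase k, (1 - (k - i)⁻¹)

noncomputable def Hs : List ℂ → Finset ℂ → ℂ
  | [], Y => if Y = ∅ then 1 else 0
  | z :: Zs, Y => Hs Zs Y + ∑ k ∈ Y, (k - z)⁻¹ * (Zs.map (fun u => 1 + (k - u)⁻¹)).prod *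
      cc Y k * Hs Zs (Y.erase k)

theorem cc_cc (Y : Finset ℂ) (k k' : ℂ) (hk' : k' ∈ Y) (h : k ≠ k') :
    cc Y k * cc (Y.erase k) k' = (1 - (k - k')⁻¹) * ((∏ i ∈ (Y.erase k).erase k', (1 - (k - i)⁻¹)) *
      (∏ i ∈ (Y.erase k).erase k', (1 - (k' - i)⁻¹))) := by
  unfold cc
  rw [← Finset.mul_prod_erase (Y.erase k) _ (Finset.mem_erase.mpr ⟨h.symm, hk'⟩)]
  ring

theorem Hs_swap (a b : ℂ) (Zs : List ℂ) (Y : Finset ℂ) (ha : a ∉ Y) (hb : b ∉ Y) :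
    Hs (a :: b :: Zs) Y = Hs (b :: a :: Zs) Y := by
  set Q : ℂ → ℂ := fun k => (Zs.map (fun u => 1 + (k - u)⁻¹)).prod with hQ
  set T : ℂ → ℂ → ℂ → ℂ → ℂ := fun a b k k' =>
    (k - a)⁻¹ * (1 + (k - b)⁻¹) * (k' - b)⁻¹ * (Q k * Q k') * (cc Y k * cc (Y.erase k) k') *
      Hs Zs ((Y.erase k).erase k') with hT
  have key : ∀ a b, Hs (a :: b :: Zs) Y = Hs Zs Y +
      ∑ k ∈ Y, ((k - b)⁻¹ + (k - a)⁻¹ * (1 + (k - b)⁻¹)) * Q k * cc Y k * Hs Zs (Y.erase k) +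
      ∑ k ∈ Y, ∑ k' ∈ Y.erase k, T a b k k' := by
    intro a b
    have : ∀ k ∈ Y, (k - a)⁻¹ * ((b :: Zs).map (fun u => 1 + (k - u)⁻¹)).prod * cc Y k *
        Hs (b :: Zs) (Y.erase k) =
        ((k - a)⁻¹ * (1 + (k - b)⁻¹)) * Q k * cc Y k * Hs Zs (Y.erase k) +
        ∑ k' ∈ Y.erase k, T a b k k' := by
      intro k hk
      simp only [Hs, List.map_cons, List.prod_cons, mul_add, Finset.mul_sum, hT]
      congr 1
      · simp only [hQ]; ring
      · apply Finset.sum_congr rfl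
        intro k' hk'
        simp only [hQ]; ring
    rw [Hs, Finset.sum_congr rfl this, Finset.sum_add_distrib, Hs]
    rw [add_assoc, add_assoc, ← add_assoc (Finset.sum _ _) (Finset.sum _ _),
      ← Finset.sum_add_distrib]
    congr 2
    apply Finset.sum_congr rfl
    intro k hk
    simp only [hQ]; ring
  rw [key a b, key b a]
  have e1 : ∑ k ∈ Y, ((k - b)⁻¹ + (k - a)⁻¹ * (1 + (k - b)⁻¹)) * Q k * cc Y k * Hs Zs (Y.erase k)
     = ∑ k ∈ Y, ((k - a)⁻¹ + (k - b)⁻¹ * (1 + (k - a)⁻¹)) * Q k * cc Y k * Hs Zs (Y.erase k) := by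
    apply Finset.sum_congr rfl
    intro k hk
    ring
  rw [e1]
  congr 1
  rw [← sub_eq_zero, ← Finset.sum_sub_distrib]
  simp_rw [← Finset.sum_sub_distrib]
  set D : ℂ → ℂ → ℂ := fun k k' => T a b k k' - T b a k k' with hD
  have anti : ∀ k ∈ Y, ∀ k' ∈ Y.erase k, D k k' = - D k' k := by
    intro k hk k' hk'
    rw [Finset.mem_erase] at hk'
    obtain ⟨hne, hk'⟩ := hk'
    simp only [hD, hT]
    rw [cc_cc Y k k' hk' hne.symm, cc_cc Y k' k hk hne, Finset.erase_right_comm]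
    generalize Hs Zs _ = h
    generalize ∏ i ∈ (Y.erase k').erase k, (1 - (k - i)⁻¹) = P
    generalize ∏ i ∈ (Y.erase k').erase k, (1 - (k' - i)⁻¹) = P'
    have h1 : k - k' ≠ 0 := sub_ne_zero.mpr hne.symm
    have h2 : k - a ≠ 0 := sub_ne_zero.mpr (by rintro rfl; exact ha hk)
    have h3 : k - b ≠ 0 := sub_ne_zero.mpr (by rintro rfl; exact hb hk)
    have h4 : k' - a ≠ 0 := sub_ne_zero.mpr (by rintro rfl; exact ha hk')
    have h5 : k' - b ≠ 0 := sub_ne_zero.mpr (by rintro rfl; exact hb hk')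
    have e : k' - k = - (k - k') := by ring
    rw [e]
    have main : ((k - a)⁻¹ * (1 + (k - b)⁻¹) * (k' - b)⁻¹ - (k - b)⁻¹ * (1 + (k - a)⁻¹) * (k' - a)⁻¹)
        * (1 - (k - k')⁻¹) +
       ((k' - a)⁻¹ * (1 + (k' - b)⁻¹) * (k - b)⁻¹ - (k' - b)⁻¹ * (1 + (k' - a)⁻¹) * (k - a)⁻¹)
        * (1 - (-(k - k'))⁻¹) = 0 := by
      field_simp
      ring
    linear_combination (Q k * Q k' * P * P' * h) * main
  have s1 : ∑ k ∈ Y, ∑ k' ∈ Y.erase k, D k k' = ∑ k ∈ Y, ∑ k' ∈ Y.erase k, D k' k := by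
    apply Finset.sum_comm'
    intro x y
    simp only [Finset.mem_erase]
    tauto
  have s2 : ∑ k ∈ Y, ∑ k' ∈ Y.erase k, D k k' = - ∑ k ∈ Y, ∑ k' ∈ Y.erase k, D k' k := by
    rw [← Finset.sum_neg_distrib]
    apply Finset.sum_congr rfl
    intro k hk
    rw [← Finset.sum_neg_distrib]
    apply Finset.sum_congr rfl
    intro k' hk'
    exact anti k hk k' hk'
  have : (2 : ℂ) * ∑ k ∈ Y, ∑ k' ∈ Y.erase k, D k k' = 0 := by
    rw [two_mul]; nth_rewrite 2 [s2]; rw [← s1]; ring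
  exact (mul_eq_zero.mp this).resolve_left two_ne_zero

theorem Hs_perm (Z Z' : List ℂ) (h : Z.Perm Z') (Y : Finset ℂ) (hY : ∀ k ∈ Y, k ∉ Z) :
    Hs Z Y = Hs Z' Y := by
  induction h generalizing Y with
  | nil => rfl
  | cons x h ih =>
    simp only [Hs]
    rw [ih Y (fun k hk hk' => hY k hk (List.mem_cons_of_mem _ hk'))]
    congr 1
    apply Finset.sum_congr rfl
    intro k hk
    rw [ih (Y.erase k) (fun k hk hk' => hY k (Finset.mem_of_mem_erase hk)
      (List.mem_cons_of_mem _ hk')), (h.map _).prod_eq]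
  | swap x y l =>
    apply Hs_swap
    · intro h; exact hY _ h (by simp)
    · intro h; exact hY _ h (by simp)
  | trans h1 h2 ih1 ih2 =>
    rw [ih1 Y hY, ih2 Y (fun k hk hk' => hY k hk (h1.mem_iff.mpr hk'))]

noncomputable def HF (Y Z : Finset ℂ) : ℂ := Hs Z.toList Y

theorem HF_insert (Y Z : Finset ℂ) (z : ℂ) (hz : z ∉ Z) (hY : ∀ k ∈ Y, k ∉ insert z Z) :
    HF Y (insert z Z) = HF Y Z + ∑ k ∈ Y, (k - z)⁻¹ * (∏ u ∈ Z, (1 + (k - u)⁻¹)) *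
      cc Y k * HF (Y.erase k) Z := by
  unfold HF
  rw [Hs_perm _ _ (Finset.toList_insert hz) Y (by simpa using hY)]
  simp only [Hs, Finset.prod_map_toList]

theorem cc_insert_self (Y : Finset ℂ) (y : ℂ) (hy : y ∉ Y) :
    cc (insert y Y) y = ∏ i ∈ Y, (1 - (y - i)⁻¹) := by
  unfold cc; rw [Finset.erase_insert hy]

theorem cc_insert_of_mem (Y : Finset ℂ) (y k : ℂ) (hy : y ∉ Y) (hk : k ∈ Y) :
    cc (insert y Y) k = (1 - (k - y)⁻¹) * cc Y k := by
  unfold cc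
  have : y ≠ k := by rintro rfl; exact hy hk
  rw [Finset.erase_insert_of_ne this, Finset.prod_insert (by simp [hy])]

/-- partial fractions in the shape used below -/
theorem pfrac3 (Y Z : Finset ℂ) (y z : ℂ) (hyY : y ∉ Y) (hyZ : y ∉ Z) (hzZ : z ∉ Z) (hzY : z ∉ Y)
    (hyz : y ≠ z) (hd : ∀ k ∈ Y, k ∉ Z) :
    (y - z)⁻¹ * (∏ u ∈ Z, (1 + (y - u)⁻¹)) * ∏ i ∈ Y, (1 - (y - i)⁻¹) =
    (y - z)⁻¹ * (∏ u ∈ Z, (1 + (z - u)⁻¹)) * ∏ i ∈ Y, (1 + (i - z)⁻¹) +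
    (∑ m ∈ Z, (y - m)⁻¹ * (m - z)⁻¹ * (∏ u ∈ Z.erase m, (1 + (m - u)⁻¹)) *
        ∏ i ∈ Y, (1 + (i - m)⁻¹)) -
    ∑ k ∈ Y, (y - k)⁻¹ * ((k - z)⁻¹ * (∏ u ∈ Z, (1 + (k - u)⁻¹)) * cc Y k) := by
  have hdis : Disjoint Z Y := by
    rw [Finset.disjoint_left]; intro a ha hb; exact hd a hb ha
  set c : ℂ → ℂ := fun u => if u ∈ Z then 1 else -1 with hc
  have cZ : ∀ u ∈ Z, c u = 1 := fun u hu => by simp [hc, hu]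
  have cY : ∀ u ∈ Y, c u = -1 := fun u hu => by simp [hc, hd u hu]
  have h := pfrac2 (Z ∪ Y) c y z (by simp [hyY, hyZ]) (by simp [hzY, hzZ]) hyz
  have pZ : ∀ x, ∀ Z' ⊆ Z, ∏ u ∈ Z', (1 + c u * (x - u)⁻¹) = ∏ u ∈ Z', (1 + (x - u)⁻¹) := by
    intro x Z' hZ'
    apply Finset.prod_congr rfl
    intro u hu
    rw [cZ u (hZ' hu), one_mul]
  have pY : ∀ x, ∀ Y' ⊆ Y, ∏ u ∈ Y', (1 + c u * (x - u)⁻¹) = ∏ u ∈ Y', (1 - (x - u)⁻¹) := by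
    intro x Y' hY'
    apply Finset.prod_congr rfl
    intro u hu
    rw [cY u (hY' hu)]; ring
  have fl : ∀ x, ∏ i ∈ Y, (1 - (x - i)⁻¹) = ∏ i ∈ Y, (1 + (i - x)⁻¹) := by
    intro x
    apply Finset.prod_congr rfl
    intro u hu
    rw [← neg_sub u x, inv_neg]; ring
  rw [Finset.prod_union hdis, Finset.prod_union hdis, Finset.sum_union hdis,
    pZ _ Z subset_rfl, pZ _ Z subset_rfl, pY _ Y subset_rfl, pY _ Y subset_rfl, fl z] at h
  have sZ : ∑ m ∈ Z, c m * (y - m)⁻¹ * (m - z)⁻¹ * ∏ u ∈ (Z ∪ Y).erase m, (1 + c u * (m - u)⁻¹) =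
      ∑ m ∈ Z, (y - m)⁻¹ * (m - z)⁻¹ * (∏ u ∈ Z.erase m, (1 + (m - u)⁻¹)) *
        ∏ i ∈ Y, (1 + (i - m)⁻¹) := by
    apply Finset.sum_congr rfl
    intro m hm
    have hmY : m ∉ Y := fun h => hd m h hm
    rw [Finset.erase_union_distrib, Finset.erase_eq_of_notMem hmY,
      Finset.prod_union (Finset.disjoint_of_subset_left (Finset.erase_subset _ _) hdis),
      pZ _ _ (Finset.erase_subset _ _), pY _ _ subset_rfl, fl, cZ m hm]
    ring
  have sY : ∑ m ∈ Y, c m * (y - m)⁻¹ * (m - z)⁻¹ * ∏ u ∈ (Z ∪ Y).erase m, (1 + c u * (m - u)⁻¹) =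
      - ∑ k ∈ Y, (y - k)⁻¹ * ((k - z)⁻¹ * (∏ u ∈ Z, (1 + (k - u)⁻¹)) * cc Y k) := by
    rw [← Finset.sum_neg_distrib]
    apply Finset.sum_congr rfl
    intro m hm
    rw [Finset.erase_union_distrib, Finset.erase_eq_of_notMem (hd m hm),
      Finset.prod_union (Finset.disjoint_of_subset_right (Finset.erase_subset _ _) hdis),
      pZ _ _ subset_rfl, pY _ _ (Finset.erase_subset _ _), cY m hm]
    unfold cc
    ring
  rw [sZ, sY] at h
  linear_combination h

theorem HF_star (Z Y : Finset ℂ) (y : ℂ) (hy : y ∉ Y) (hyZ : y ∉ Z) (hd : ∀ k ∈ Y, k ∉ Z) :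
    HF (insert y Y) Z = ∑ m ∈ Z, (y - m)⁻¹ * (∏ i ∈ Y, (1 + (i - m)⁻¹)) *
      (∏ u ∈ Z.erase m, (1 + (m - u)⁻¹)) * HF Y (Z.erase m) := by
  induction Z using Finset.induction_on generalizing Y y with
  | empty => simp [HF, Hs]
  | insert z Z hz ih =>
    have hyz : y ≠ z := by rintro rfl; simp at hyZ
    have hyZ' : y ∉ Z := fun h => hyZ (Finset.mem_insert_of_mem h)
    have hd' : ∀ k ∈ Y, k ∉ Z := fun k hk h => hd k hk (Finset.mem_insert_of_mem h)
    have hzY : z ∉ Y := fun h => hd z h (by simp)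
    set A : ℂ → ℂ := fun k => (k - z)⁻¹ * (∏ u ∈ Z, (1 + (k - u)⁻¹)) with hA
    set B : ℂ → ℂ := fun m => ∏ u ∈ Z.erase m, (1 + (m - u)⁻¹) with hB
    set E : ℂ → ℂ := fun m => ∏ i ∈ Y, (1 + (i - m)⁻¹) with hE
    rw [HF_insert _ _ _ hz (by
      intro k hk
      rcases Finset.mem_insert.mp hk with rfl | hk
      · exact hyZ
      · exact hd k hk), Finset.sum_insert hy, Finset.erase_insert hy, cc_insert_self _ _ hy,
      pfrac3 Y Z y z hy hyZ' hz hzY hyz hd', Finset.sum_insert hz, Finset.erase_insert hz]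
    -- second sum
    have e2 : ∀ k ∈ Y, (k - z)⁻¹ * (∏ u ∈ Z, (1 + (k - u)⁻¹)) * cc (insert y Y) k *
        HF ((insert y Y).erase k) Z =
        (y - k)⁻¹ * ((k - z)⁻¹ * (∏ u ∈ Z, (1 + (k - u)⁻¹)) * cc Y k) * HF Y Z +
        ∑ m ∈ Z, (y - m)⁻¹ * E m * B m * ((1 - (k - m)⁻¹) * (k - z)⁻¹ *
          (∏ u ∈ Z.erase m, (1 + (k - u)⁻¹)) * cc Y k * HF (Y.erase k) (Z.erase m)) := by
      intro k hk
      have hyk : y ≠ k := by rintro rfl; exact hy hk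
      rw [cc_insert_of_mem _ _ _ hy hk, Finset.erase_insert_of_ne hyk,
        ih (Y.erase k) y (by simp [hy]) hyZ' (fun j hj => hd' j (Finset.mem_of_mem_erase hj))]
      have hYk := ih (Y.erase k) k (by simp) (hd' k hk)
        (fun j hj => hd' j (Finset.mem_of_mem_erase hj))
      rw [Finset.insert_erase hk] at hYk
      rw [hYk, Finset.mul_sum, Finset.mul_sum, ← Finset.sum_add_distrib]
      apply Finset.sum_congr rfl
      intro m hm
      have hEm : E m = (1 + (k - m)⁻¹) * ∏ i ∈ Y.erase k, (1 + (i - m)⁻¹) := by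
        simp only [hE]; rw [Finset.mul_prod_erase Y (fun i => 1 + (i - m)⁻¹) hk]
      have hPm : ∏ u ∈ Z, (1 + (k - u)⁻¹) = (1 + (k - m)⁻¹) * ∏ u ∈ Z.erase m, (1 + (k - u)⁻¹) := by
        rw [Finset.mul_prod_erase Z (fun u => 1 + (k - u)⁻¹) hm]
      rw [hEm, hPm]
      simp only [hB]
      generalize HF _ _ = h
      generalize ∏ u ∈ Z.erase m, (1 + (m - u)⁻¹) = b
      generalize ∏ u ∈ Z.erase m, (1 + (k - u)⁻¹) = b'
      generalize ∏ i ∈ Y.erase k, (1 + (i - m)⁻¹) = e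
      have h1 : y - k ≠ 0 := sub_ne_zero.mpr hyk
      have h2 : y - m ≠ 0 := sub_ne_zero.mpr (by rintro rfl; exact hyZ' hm)
      have h3 : k - m ≠ 0 := sub_ne_zero.mpr (by rintro rfl; exact hd' _ hk hm)
      have main : (1 - (k - y)⁻¹) * (y - m)⁻¹ =
          (y - k)⁻¹ * (k - m)⁻¹ + (y - m)⁻¹ * (1 - (k - m)⁻¹) := by
        rw [← neg_sub y k]
        field_simp
        ring
      linear_combination ((k - z)⁻¹ * (1 + (k - m)⁻¹) * b' * cc Y k * e * b * h) * main
    rw [Finset.sum_congr rfl e2, Finset.sum_add_distrib, ← Finset.sum_mul, Finset.sum_comm,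
      ih Y y hy hyZ' hd']
    have e3 : ∀ m ∈ Z, (y - m)⁻¹ * (∏ i ∈ Y, (1 + (i - m)⁻¹)) *
        (∏ u ∈ (insert z Z).erase m, (1 + (m - u)⁻¹)) * HF Y ((insert z Z).erase m) =
        (y - m)⁻¹ * E m * B m * HF Y (Z.erase m) +
        (y - m)⁻¹ * (m - z)⁻¹ * B m * E m * HF Y Z +
        ∑ k ∈ Y, (y - m)⁻¹ * E m * B m * ((1 - (k - m)⁻¹) * (k - z)⁻¹ *
          (∏ u ∈ Z.erase m, (1 + (k - u)⁻¹)) * cc Y k * HF (Y.erase k) (Z.erase m)) := by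
      intro m hm
      have hzm : z ≠ m := by rintro rfl; exact hz hm
      have hsub : ∀ w ∈ insert z Z, insert w (Z.erase m) ⊆ insert z Z := by
        intro w hw x hx
        rcases Finset.mem_insert.mp hx with rfl | hx
        · exact hw
        · exact Finset.mem_insert_of_mem (Finset.mem_of_mem_erase hx)
      have hZ : HF Y Z = HF Y (insert m (Z.erase m)) := by rw [Finset.insert_erase hm]
      rw [hZ, Finset.erase_insert_of_ne hzm, Finset.prod_insert (by simp [hz]),
        HF_insert Y (Z.erase m) z (by simp [hz])
          (fun k hk h => hd k hk (hsub z (by simp) h)),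
        HF_insert Y (Z.erase m) m (by simp)
          (fun k hk h => hd k hk (hsub m (by simp [hm]) h))]
      rw [← Finset.mul_sum]
      have main : (1 + (m - z)⁻¹) * ∑ k ∈ Y, (k - z)⁻¹ * (∏ u ∈ Z.erase m, (1 + (k - u)⁻¹)) *
            cc Y k * HF (Y.erase k) (Z.erase m) =
          (m - z)⁻¹ * (∑ k ∈ Y, (k - m)⁻¹ * (∏ u ∈ Z.erase m, (1 + (k - u)⁻¹)) *
            cc Y k * HF (Y.erase k) (Z.erase m)) +
          ∑ k ∈ Y, ((1 - (k - m)⁻¹) * (k - z)⁻¹ *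
          (∏ u ∈ Z.erase m, (1 + (k - u)⁻¹)) * cc Y k * HF (Y.erase k) (Z.erase m)) := by
        rw [Finset.mul_sum, Finset.mul_sum, ← Finset.sum_add_distrib]
        apply Finset.sum_congr rfl
        intro k hk
        generalize ∏ u ∈ Z.erase m, (1 + (k - u)⁻¹) = b'
        generalize HF _ _ = h
        have h1 : m - z ≠ 0 := sub_ne_zero.mpr hzm.symm
        have h2 : k - z ≠ 0 := sub_ne_zero.mpr (by rintro rfl; exact hzY hk)
        have h3 : k - m ≠ 0 := sub_ne_zero.mpr (by rintro rfl; exact hd' _ hk hm)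
        have : (1 + (m - z)⁻¹) * (k - z)⁻¹ = (m - z)⁻¹ * (k - m)⁻¹ + (1 - (k - m)⁻¹) * (k - z)⁻¹ := by
          field_simp
          ring
        linear_combination (b' * cc Y k * h) * this
      simp only [hE, hB]
      linear_combination ((y - m)⁻¹ * (∏ i ∈ Y, (1 + (i - m)⁻¹)) *
        (∏ u ∈ Z.erase m, (1 + (m - u)⁻¹))) * main
    rw [Finset.sum_congr rfl e3, Finset.sum_add_distrib, Finset.sum_add_distrib, ← Finset.sum_mul]
    simp only [hE, hB]
    ring

noncomputable def im {n : ℕ} (x : Fin n → ℂ) : Finset ℂ := Finset.univ.image x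

theorem prod_im {n : ℕ} (x : Fin n → ℂ) (hx : Function.Injective x) (f : ℂ → ℂ) :
    ∏ k ∈ im x, f k = ∏ i, f (x i) := by
  unfold im; rw [Finset.prod_image (fun a _ b _ h => hx h)]

theorem sum_im {n : ℕ} (x : Fin n → ℂ) (hx : Function.Injective x) (f : ℂ → ℂ) :
    ∑ k ∈ im x, f k = ∑ i, f (x i) := by
  unfold im; rw [Finset.sum_image (fun a _ b _ h => hx h)]

noncomputable def rest {n : ℕ} (x : Fin (n + 1) → ℂ) (m : Fin (n + 1)) : Fin n → ℂ :=
  fun i => x (Equiv.swap 0 m i.succ)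

theorem rest_inj {n : ℕ} (x : Fin (n + 1) → ℂ) (hx : Function.Injective x) (m : Fin (n + 1)) :
    Function.Injective (rest x m) := by
  intro a b h
  exact Fin.succ_injective _ ((Equiv.swap 0 m).injective (hx h))

theorem im_rest {n : ℕ} (x : Fin (n + 1) → ℂ) (hx : Function.Injective x) (m : Fin (n + 1)) :
    im (rest x m) = (im x).erase (x m) := by
  ext c
  simp only [im, rest, Finset.mem_image, Finset.mem_univ, true_and, Finset.mem_erase]
  constructor
  · rintro ⟨a, rfl⟩
    refine ⟨fun h => ?_, _, rfl⟩
    have h1 := hx h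
    have h2 : Equiv.swap 0 m a.succ = Equiv.swap 0 m 0 := by rw [h1, Equiv.swap_apply_left]
    exact Fin.succ_ne_zero _ ((Equiv.swap 0 m).injective h2)
  · rintro ⟨hne, a, rfl⟩
    have ham : a ≠ m := fun h => hne (by rw [h])
    have h0 : Equiv.swap 0 m a ≠ 0 := by
      intro h
      apply ham
      have := congrArg (Equiv.swap 0 m) h
      rwa [Equiv.swap_apply_self, Equiv.swap_apply_left] at this
    obtain ⟨b, hb⟩ := Fin.exists_succ_eq.mpr h0
    exact ⟨b, by rw [hb, Equiv.swap_apply_self]⟩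

theorem sum_perm_cons {n : ℕ} (x : Fin (n + 1) → ℂ) (Φ : (Fin (n + 1) → ℂ) → ℂ) :
    ∑ σ : Equiv.Perm (Fin (n + 1)), Φ (fun i => x (σ i)) =
      ∑ m, ∑ e : Equiv.Perm (Fin n),
        Φ (Fin.cons (x m) (fun i => rest x m (e i)) : Fin (n + 1) → ℂ) := by
  rw [← Fintype.sum_prod_type', ← Equiv.Perm.decomposeFin.symm.sum_comp]
  apply Finset.sum_congr rfl
  rintro ⟨m, e⟩ _
  congr 1
  funext i
  refine Fin.cases ?_ (fun i => ?_) i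
  · simp
  · simp [rest]

theorem sum_perm_snoc {n : ℕ} (x : Fin (n + 1) → ℂ) (Φ : (Fin (n + 1) → ℂ) → ℂ) :
    ∑ σ : Equiv.Perm (Fin (n + 1)), Φ (fun i => x (σ i)) =
      ∑ m, ∑ e : Equiv.Perm (Fin n),
        Φ (Fin.snoc (α := fun _ => ℂ) (fun i => rest x m (e i)) (x m) : Fin (n + 1) → ℂ) := by
  have h := sum_perm_cons x (fun t => Φ (t ∘ Fin.rev))
  have h1 : ∑ σ : Equiv.Perm (Fin (n + 1)), Φ ((fun i => x (σ i)) ∘ Fin.rev) =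
      ∑ σ : Equiv.Perm (Fin (n + 1)), Φ (fun i => x (σ i)) :=
    Equiv.sum_comp (Equiv.mulRight (Fin.revPerm (n := n + 1)))
      (fun σ : Equiv.Perm (Fin (n + 1)) => Φ (fun i => x (σ i)))
  rw [← h1, h]
  apply Finset.sum_congr rfl
  intro m _
  rw [← Equiv.sum_comp (Equiv.mulRight (Fin.revPerm (n := n)))
      (fun e : Equiv.Perm (Fin n) =>
        Φ (Fin.snoc (α := fun _ => ℂ) (fun i => rest x m (e i)) (x m) : Fin (n + 1) → ℂ))]
  apply Finset.sum_congr rfl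
  intro e _
  rw [Fin.cons_comp_rev]
  rfl

noncomputable def Wf {n : ℕ} (t : Fin n → ℂ) : ℂ :=
  ∏ i, ∏ j ∈ Finset.Ioi i, (1 - (t i - t j)⁻¹)

theorem Wf_cons {n : ℕ} (a : ℂ) (t : Fin n → ℂ) :
    Wf (Fin.cons a t : Fin (n + 1) → ℂ) = (∏ j, (1 - (a - t j)⁻¹)) * Wf t := by
  unfold Wf
  rw [Fin.prod_univ_succ, Fin.prod_Ioi_zero]
  simp [Fin.prod_Ioi_succ]

theorem prod_Ioi_castSucc' {n : ℕ} (i : Fin n) (f : Fin (n + 1) → ℂ) :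
    ∏ j ∈ Finset.Ioi i.castSucc, f j = (∏ j ∈ Finset.Ioi i, f j.castSucc) * f (Fin.last n) := by
  have : Finset.Ioi i.castSucc = insert (Fin.last n) ((Finset.Ioi i).map Fin.castSuccEmb) := by
    ext j
    refine Fin.lastCases ?_ (fun j => ?_) j
    · simp [Fin.castSucc_lt_last]
    · simp [Fin.le_last]
  rw [this, Finset.prod_insert, Finset.prod_map, mul_comm]
  · rfl
  · simp only [Finset.mem_map, not_exists, not_and]
    intro x _ h
    exact (Fin.castSucc_lt_last x).ne h

theorem Wf_snoc {n : ℕ} (a : ℂ) (t : Fin n → ℂ) :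
    Wf (Fin.snoc (α := fun _ => ℂ) t a : Fin (n + 1) → ℂ) =
      (∏ j, (1 - (t j - a)⁻¹)) * Wf t := by
  unfold Wf
  rw [Fin.prod_univ_castSucc]
  have : Finset.Ioi (Fin.last n) = ∅ := by ext j; simp [Fin.le_last]
  rw [this]
  simp only [prod_Ioi_castSucc', Fin.snoc_castSucc, Fin.snoc_last, Finset.prod_empty, mul_one]
  rw [Finset.prod_mul_distrib, mul_comm]

theorem sum_strictMono {p r : ℕ} (Φ : (Fin (p + 1) → Fin (r + 1)) → ℂ) :
    ∑ l ∈ Finset.univ.filter (fun l : Fin (p + 1) → Fin (r + 1) => StrictMono l), Φ l =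
    ∑ l ∈ Finset.univ.filter (fun l : Fin (p + 1) → Fin r => StrictMono l),
      Φ (fun i => (l i).succ) +
    ∑ l ∈ Finset.univ.filter (fun l : Fin p → Fin r => StrictMono l),
      Φ (Fin.cons 0 (fun i => (l i).succ) : Fin (p + 1) → Fin (r + 1)) := by
  rw [← Finset.sum_filter_add_sum_filter_not _ (fun l : Fin (p + 1) → Fin (r + 1) => l 0 ≠ 0)]
  congr 1
  · symm
    apply Finset.sum_bij (fun l _ => fun i => (l i).succ)
    · intro l hl
      simp only [Finset.mem_filter, Finset.mem_univ, true_and] at hl ⊢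
      exact ⟨fun a b h => Fin.succ_lt_succ_iff.mpr (hl h), Fin.succ_ne_zero _⟩
    · intro l _ l' _ h
      funext i
      exact Fin.succ_injective _ (congrFun h i)
    · intro l hl
      simp only [Finset.mem_filter, Finset.mem_univ, true_and] at hl
      have hne : ∀ i, l i ≠ 0 := by
        intro i hi
        have := hl.1.monotone (Fin.zero_le i)
        rw [hi] at this
        exact hl.2 (Fin.le_zero_iff.mp this)
      refine ⟨fun i => (l i).pred (hne i), ?_, ?_⟩
      · simp only [Finset.mem_filter, Finset.mem_univ, true_and]
        intro a b h
        exact Fin.pred_lt_pred_iff.mpr (hl.1 h)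
      · funext i; simp
    · intro l _; rfl
  · symm
    apply Finset.sum_bij (fun l _ => (Fin.cons 0 (fun i => (l i).succ) : Fin (p + 1) → Fin (r + 1)))
    · intro l hl
      simp only [Finset.mem_filter, Finset.mem_univ, true_and] at hl ⊢
      refine ⟨?_, by simp⟩
      intro a b
      refine Fin.cases ?_ (fun a => ?_) a <;> refine Fin.cases ?_ (fun b => ?_) b
      · simp
      · intro _; simp
      · intro h; simp at h
      · intro h
        simp only [Fin.cons_succ]
        exact Fin.succ_lt_succ_iff.mpr (hl (Fin.succ_lt_succ_iff.mp h))
    · intro l _ l' _ h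
      funext i
      have := congrFun h i.succ
      simpa using this
    · intro l hl
      simp only [Finset.mem_filter, Finset.mem_univ, true_and, not_not] at hl
      have hne : ∀ i : Fin p, l i.succ ≠ 0 := by
        intro i hi
        have := hl.1 (Fin.succ_pos i)
        rw [hi] at this
        exact absurd this (Fin.not_lt_zero _)
      refine ⟨fun i => (l i.succ).pred (hne i), ?_, ?_⟩
      · simp only [Finset.mem_filter, Finset.mem_univ, true_and]
        intro a b h
        exact Fin.pred_lt_pred_iff.mpr (hl.1 (Fin.succ_lt_succ_iff.mpr h))
      · funext i
        refine Fin.cases ?_ (fun i => ?_) i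
        · simp [hl.2]
        · simp
    · intro l _; rfl

noncomputable def Fl {p r : ℕ} (l : Fin p → Fin r) (y : Fin p → ℂ) (z : Fin r → ℂ) : ℂ :=
  ∏ i, ((y i - z (l i))⁻¹ * ∏ j ∈ Finset.Ioi (l i), (1 + (y i - z j)⁻¹))

noncomputable def Hd {p r : ℕ} (y : Fin p → ℂ) (z : Fin r → ℂ) : ℂ :=
  ∑ l ∈ Finset.univ.filter (fun l : Fin p → Fin r => StrictMono l),
    ∑ τ : Equiv.Perm (Fin p), Fl l (fun i => y (τ i)) z * Wf (fun i => y (τ i))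

theorem Fl_succ {p r : ℕ} (l : Fin p → Fin r) (y : Fin p → ℂ) (z : Fin (r + 1) → ℂ) :
    Fl (fun i => (l i).succ) y z = Fl l y (fun i => z i.succ) := by
  unfold Fl
  simp only [Fin.prod_Ioi_succ]

theorem Fl_cons {p r : ℕ} (l : Fin p → Fin r) (a : ℂ) (y : Fin p → ℂ) (z : Fin (r + 1) → ℂ) :
    Fl (Fin.cons 0 (fun i => (l i).succ) : Fin (p + 1) → Fin (r + 1))
      (Fin.cons a y : Fin (p + 1) → ℂ) z =
    (a - z 0)⁻¹ * (∏ j, (1 + (a - z (Fin.succ j))⁻¹)) * Fl l y (fun i => z i.succ) := by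
  unfold Fl
  rw [Fin.prod_univ_succ]
  simp only [Fin.cons_zero, Fin.cons_succ, Fin.prod_Ioi_succ, Fin.prod_Ioi_zero]

theorem HF_empty (Z : Finset ℂ) : HF ∅ Z = 1 := by
  unfold HF
  induction Z.toList with
  | nil => simp [Hs]
  | cons a l ih => simp [Hs, ih]

theorem Hd_eq {p r : ℕ} (y : Fin p → ℂ) (z : Fin r → ℂ) (hy : Function.Injective y)
    (hz : Function.Injective z) (hyz : ∀ i j, y i ≠ z j) : Hd y z = HF (im y) (im z) := by
  induction r generalizing p with
  | zero =>
    cases p with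
    | zero =>
      have : im y = ∅ := by simp [im]
      rw [this, HF_empty]
      simp [Hd, Fl, Wf, Finset.filter_true_of_mem, Subsingleton.strictMono]
    | succ p =>
      have h1 : im z = ∅ := by simp [im]
      have h2 : im y ≠ ∅ := Finset.ne_empty_of_mem (Finset.mem_image_of_mem y (Finset.mem_univ 0))
      rw [h1, HF, Finset.toList_empty, Hs, if_neg h2, Hd]
      simp
  | succ r ih =>
    cases p with
    | zero =>
      have : im y = ∅ := by simp [im]
      rw [this, HF_empty]
      simp [Hd, Fl, Wf, Finset.filter_true_of_mem, Subsingleton.strictMono]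
    | succ p =>
      have hz' : Function.Injective (fun i : Fin r => z i.succ) :=
        fun a b h => Fin.succ_injective _ (hz h)
      have hmem : z 0 ∉ im (fun i : Fin r => z i.succ) := by
        simp only [im, Finset.mem_image, Finset.mem_univ, true_and, not_exists]
        intro i h
        exact Fin.succ_ne_zero _ (hz h)
      have him : im z = insert (z 0) (im (fun i : Fin r => z i.succ)) := by
        ext c
        simp only [im, Finset.mem_insert, Finset.mem_image, Finset.mem_univ, true_and]
        rw [Fin.exists_fin_succ, eq_comm]
      rw [him, HF_insert _ _ _ hmem (by
        rw [← him]
        intro k hk hk'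
        simp only [im, Finset.mem_image, Finset.mem_univ, true_and] at hk hk'
        obtain ⟨i, rfl⟩ := hk
        obtain ⟨j, hj⟩ := hk'
        exact hyz i j hj.symm), Hd, sum_strictMono]
      congr 1
      · simp only [Fl_succ]
        rw [← ih y (fun i : Fin r => z i.succ) hy hz' (fun i j => hyz _ _)]
        rfl
      · rw [sum_im y hy]
        have : ∀ l : Fin p → Fin r, ∑ τ : Equiv.Perm (Fin (p + 1)),
            Fl (Fin.cons 0 (fun i => (l i).succ) : Fin (p + 1) → Fin (r + 1))
              (fun i => y (τ i)) z * Wf (fun i => y (τ i)) =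
            ∑ m, ∑ e : Equiv.Perm (Fin p), (y m - z 0)⁻¹ *
              (∏ j : Fin r, (1 + (y m - z j.succ)⁻¹)) * cc (im y) (y m) *
              (Fl l (fun i => rest y m (e i)) (fun i => z i.succ) *
                Wf (fun i => rest y m (e i))) := by
          intro l
          rw [sum_perm_cons y (fun t =>
            Fl (Fin.cons 0 (fun i => (l i).succ) : Fin (p + 1) → Fin (r + 1)) t z * Wf t)]
          apply Finset.sum_congr rfl
          intro m _
          apply Finset.sum_congr rfl
          intro e _
          rw [Fl_cons, Wf_cons, cc, ← im_rest y hy, prod_im _ (rest_inj y hy m),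
            Equiv.prod_comp e (fun i => 1 - (y m - rest y m i)⁻¹)]
          ring
        rw [Finset.sum_congr rfl (fun l _ => this l), Finset.sum_comm]
        apply Finset.sum_congr rfl
        intro m _
        simp only [← Finset.mul_sum]
        rw [prod_im _ hz', ← im_rest y hy,
          ← ih (rest y m) (fun i : Fin r => z i.succ) (rest_inj y hy m) hz' (fun i j => hyz _ _)]
        rfl

theorem sum_Wf {n : ℕ} (z : Fin n → ℂ) (hz : Function.Injective z) :
    ∑ σ : Equiv.Perm (Fin n), Wf (fun i => z (σ i)) = (n.factorial : ℂ) := by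
  induction n with
  | zero => simp [Wf]
  | succ n ih =>
    rw [sum_perm_snoc z Wf]
    have : ∀ m, ∑ e : Equiv.Perm (Fin n),
        Wf (Fin.snoc (α := fun _ => ℂ) (fun i => rest z m (e i)) (z m) : Fin (n + 1) → ℂ) =
        (∏ u ∈ (im z).erase (z m), (1 + (z m - u)⁻¹)) * (n.factorial : ℂ) := by
      intro m
      rw [← ih (rest z m) (rest_inj z hz m), Finset.mul_sum]
      apply Finset.sum_congr rfl
      intro e _
      rw [Wf_snoc, ← im_rest z hz, prod_im _ (rest_inj z hz m),
        Equiv.prod_comp e (fun i => 1 - (rest z m i - z m)⁻¹)]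
      congr 1
      apply Finset.prod_congr rfl
      intro i _
      rw [← neg_sub (z m), inv_neg]; ring
    rw [Finset.sum_congr rfl (fun m _ => this m), ← Finset.sum_mul,
      ← sum_im z hz (fun k => ∏ u ∈ (im z).erase k, (1 + (k - u)⁻¹)), sum_prod_card]
    have : (im z).card = n + 1 := by
      unfold im; rw [Finset.card_image_of_injective _ hz]; simp
    rw [this, Nat.factorial_succ]
    push_cast; ring

noncomputable def Ph {q p : ℕ} (y : Fin p → ℂ) (w : Fin (q + p) → ℂ) : ℂ :=
  ∏ i, ((y i - w (Fin.natAdd q i))⁻¹ *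
    ∏ j ∈ Finset.Ioi i, (1 + (y i - w (Fin.natAdd q j))⁻¹))

theorem Ph_snoc {q p : ℕ} (y : Fin (p + 1) → ℂ) (w : Fin (q + p) → ℂ) (c : ℂ) :
    Ph (q := q) (p := p + 1) y (Fin.snoc (α := fun _ => ℂ) w c : Fin (q + p + 1) → ℂ) =
    (y (Fin.last p) - c)⁻¹ * (∏ i : Fin p, (1 + (y i.castSucc - c)⁻¹)) *
      Ph (fun i : Fin p => y i.castSucc) w := by
  unfold Ph
  have hl : Finset.Ioi (Fin.last p) = ∅ := by ext j; simp [Fin.le_last]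
  have e1 : (Fin.snoc (α := fun _ => ℂ) w c : Fin (q + p + 1) → ℂ)
      (Fin.natAdd q (Fin.last p)) = c := by
    exact Fin.snoc_last (α := fun _ => ℂ) c w
  have e2 : ∀ i : Fin p, (Fin.snoc (α := fun _ => ℂ) w c : Fin (q + p + 1) → ℂ)
      (Fin.natAdd q i.castSucc) = w (Fin.natAdd q i) := by
    intro i
    exact Fin.snoc_castSucc (α := fun _ => ℂ) c w (Fin.natAdd q i)
  rw [Fin.prod_univ_castSucc, hl]
  simp only [prod_Ioi_castSucc', e1, e2, Finset.prod_empty, mul_one, Finset.prod_mul_distrib]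
  ring

theorem Gd_eq {q p : ℕ} (y : Fin p → ℂ) (z : Fin (q + p) → ℂ) (hy : Function.Injective y)
    (hz : Function.Injective z) (hyz : ∀ i j, y i ≠ z j) :
    ∑ σ : Equiv.Perm (Fin (q + p)), Ph y (fun i => z (σ i)) * Wf (fun i => z (σ i)) =
      (q.factorial : ℂ) * HF (im y) (im z) := by
  induction p with
  | zero =>
    have : im y = ∅ := by simp [im]
    rw [this, HF_empty]
    simp only [Ph, Finset.univ_eq_empty, Finset.prod_empty, one_mul, mul_one]
    exact sum_Wf (n := q) z hz
  | succ p ih =>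
    have hy' : Function.Injective (fun i : Fin p => y i.castSucc) :=
      fun a b h => Fin.castSucc_injective _ (hy h)
    have hmem : y (Fin.last p) ∉ im (fun i : Fin p => y i.castSucc) := by
      simp only [im, Finset.mem_image, Finset.mem_univ, true_and, not_exists]
      intro i h
      exact (Fin.castSucc_lt_last i).ne (hy h)
    have him : im y = insert (y (Fin.last p)) (im (fun i : Fin p => y i.castSucc)) := by
      ext c
      simp only [im, Finset.mem_insert, Finset.mem_image, Finset.mem_univ, true_and]
      constructor
      · rintro ⟨i, rfl⟩
        refine Fin.lastCases (Or.inl rfl) (fun i => Or.inr ⟨i, rfl⟩) i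
      · rintro (rfl | ⟨i, rfl⟩)
        · exact ⟨_, rfl⟩
        · exact ⟨_, rfl⟩
    have hd : ∀ i, y i ∉ im z := by
      intro i h
      simp only [im, Finset.mem_image, Finset.mem_univ, true_and] at h
      obtain ⟨j, hj⟩ := h
      exact hyz i j hj.symm
    rw [him, HF_star _ _ _ hmem (hd _) (by
      intro k hk
      simp only [im, Finset.mem_image, Finset.mem_univ, true_and] at hk
      obtain ⟨i, rfl⟩ := hk
      exact hd _), sum_im z hz, Finset.mul_sum]
    refine (sum_perm_snoc (n := q + p) z (fun t => Ph (q := q) (p := p + 1) y t * Wf t)).trans ?_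
    apply Finset.sum_congr rfl
    intro m _
    rw [prod_im _ hy', ← im_rest (n := q + p) z hz,
      prod_im _ (rest_inj (n := q + p) z hz m)]
    have hi := ih (fun i : Fin p => y i.castSucc) (rest (n := q + p) z m) hy'
      (rest_inj (n := q + p) z hz m) (fun i j => hyz _ _)
    rw [mul_left_comm, ← hi, Finset.mul_sum]
    apply Finset.sum_congr rfl
    intro e _
    rw [Ph_snoc, Wf_snoc, Equiv.prod_comp e (fun i => 1 - (rest (n := q + p) z m i - z m)⁻¹)]
    have : ∏ i, (1 - (rest (n := q + p) z m i - z m)⁻¹) =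
        ∏ i, (1 + (z m - rest (n := q + p) z m i)⁻¹) := by
      apply Finset.prod_congr rfl
      intro i _
      rw [← neg_sub (z m), inv_neg]; ring
    rw [this]
    ring

theorem chain_sum (n : ℕ) (P : ℕ → Type) [∀ a, Fintype (P a)] (K : (a : ℕ) → P a → P (a + 1) → ℂ)
    (g : ℕ → ℂ) (hg : ∀ a < n, ∀ x, ∑ t, K a x t = g a) (x : P 0) :
    (∑ σ : (a : Fin (n + 1)) → P a, if σ 0 = x then
      ∏ a : Fin n, K a (σ a.castSucc) (σ a.succ) else 0) = ∏ a ∈ Finset.range n, g a := by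
  have step : ∀ f : ((a : Fin (n + 1)) → P a) → ℂ, ∑ σ, f σ =
      ∑ b : P 0, ∑ c : (a : Fin n) → P (a + 1),
        f (Fin.cons (α := fun a : Fin (n + 1) => P a) b c) := by
    intro f
    have h1 := Equiv.sum_comp (Fin.consEquiv (fun a : Fin (n + 1) => P a)) f
    rw [← h1]
    exact Fintype.sum_prod_type _
  refine (step _).trans ?_
  refine (Finset.sum_eq_single x ?_ ?_).trans ?_
  · intro b _ hb
    apply Finset.sum_eq_zero
    intro c _
    exact if_neg hb
  · intro h; exact absurd (Finset.mem_univ _) h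
  refine (Finset.sum_congr rfl (fun c _ => if_pos rfl)).trans ?_
  induction n generalizing P g with
  | zero => simp
  | succ n ih =>
    have step' : ∀ f : ((a : Fin (n + 1)) → P (a + 1)) → ℂ, ∑ σ, f σ =
        ∑ b : P 1, ∑ c : (a : Fin n) → P (a + 1 + 1),
          f (Fin.cons (α := fun a : Fin (n + 1) => P (a + 1)) b c) := by
      intro f
      have h1 := Equiv.sum_comp (Fin.consEquiv (fun a : Fin (n + 1) => P (a + 1))) f
      rw [← h1]
      exact Fintype.sum_prod_type _
    refine (step' _).trans ?_
    have h := fun x' => ih (fun a => P (a + 1)) (fun a => K (a + 1)) (fun a => g (a + 1))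
        (fun a ha => hg (a + 1) (by omega)) x' step'
    rw [Finset.prod_range_succ', mul_comm, ← hg 0 (by omega) x, Finset.sum_mul]
    apply Finset.sum_congr rfl
    intro b _
    rw [← h b, Finset.mul_sum]
    apply Finset.sum_congr rfl
    intro c _
    rw [Fin.prod_univ_succ]
    rfl

theorem frac_plus (a b : ℂ) (h : a ≠ b) : (a - b + 1) / (a - b) = 1 + (a - b)⁻¹ := by
  have : a - b ≠ 0 := sub_ne_zero.mpr h
  field_simp

theorem frac_minus (a b : ℂ) (h : a ≠ b) : (a - b - 1) / (a - b) = 1 - (a - b)⁻¹ := by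
  have : a - b ≠ 0 := sub_ne_zero.mpr h
  field_simp

theorem prod_Ioo_fin {n : ℕ} (i : Fin n) (f : ℕ → ℂ) :
    ∏ j ∈ Finset.Ioo (i : ℕ) n, f j = ∏ j ∈ Finset.Ioi i, f j := by
  rw [← Fin.map_valEmbedding_Ioi, Finset.prod_map]
  rfl

theorem Wg_eq {k : ℕ} (t : ℕ → ℂ) (u : Fin k → ℂ) (h : ∀ i : Fin k, t i = u i)
    (hu : Function.Injective u) : Wg k t = Wf u := by
  unfold Wg Wf
  rw [Finset.prod_range]
  apply Finset.prod_congr rfl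
  intro i _
  rw [prod_Ioo_fin]
  apply Finset.prod_congr rfl
  intro j hj
  rw [h, h, frac_minus]
  intro e
  exact (Finset.mem_Ioi.mp hj).ne (hu e)

theorem permOne_eq {r : ℕ} (z : ℕ → ℂ) (σ : Equiv.Perm (Fin r)) (i : Fin r) :
    permOne r z σ i = z (σ i) := by
  unfold permOne
  rw [dif_pos i.2]

theorem G_eq (p r : ℕ) (hpr : p ≤ r) (y z : ℕ → ℂ) (hy : Function.Injective (fun i : Fin p => y i))
    (hz : Function.Injective (fun i : Fin r => z i))
    (hyz : ∀ (i : Fin p) (j : Fin r), y i ≠ z j) :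
    G p r y z = HF (im (fun i : Fin p => y i)) (im (fun i : Fin r => z i)) := by
  obtain ⟨q, rfl⟩ := Nat.exists_eq_add_of_le' hpr
  unfold G
  have hq : q + p - p = q := by omega
  have key := Gd_eq (q := q) (fun i : Fin p => y i) (fun i : Fin (q + p) => z i) hy hz hyz
  have hf : (q.factorial : ℂ) ≠ 0 := by exact_mod_cast q.factorial_ne_zero
  rw [hq]
  have e : ∀ σ : Equiv.Perm (Fin (q + p)),
      (∏ i ∈ Finset.range p, ((y i - permOne (q + p) z σ (i + q))⁻¹ *
        ∏ j ∈ Finset.Ioo i p, ((y i - permOne (q + p) z σ (j + q) + 1) /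
          (y i - permOne (q + p) z σ (j + q))))) * Wg (q + p) (permOne (q + p) z σ) =
      Ph (fun i : Fin p => y i) (fun i => z (σ i)) * Wf (fun i => z (σ i)) := by
    intro σ
    have hp : ∀ i : Fin p, permOne (q + p) z σ (i + q) = z (σ (Fin.natAdd q i)) := by
      intro i
      rw [← permOne_eq z σ, Fin.val_natAdd, add_comm (i : ℕ) q]
    rw [Wg_eq (permOne (q + p) z σ) (fun i => z (σ i)) (permOne_eq z σ)
      (fun a b h => σ.injective (hz h)), Finset.prod_range]
    congr 1
    unfold Ph
    apply Finset.prod_congr rfl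
    intro i _
    rw [prod_Ioo_fin i (fun j => (y i - permOne (q + p) z σ (j + q) + 1) /
          (y i - permOne (q + p) z σ (j + q))), hp]
    congr 1
    apply Finset.prod_congr rfl
    intro j _
    rw [hp, frac_plus _ _ (hyz _ _)]
  rw [Finset.sum_congr rfl (fun σ _ => e σ), key]
  field_simp

theorem im_perm {n : ℕ} (x : Fin n → ℂ) (σ : Equiv.Perm (Fin n)) :
    im (fun i => x (σ i)) = im x := by
  ext c
  simp only [im, Finset.mem_image, Finset.mem_univ, true_and]
  exact σ.exists_congr_left.trans (by simp)

/-- The kernel of one level: sum over the strictly increasing maps. -/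
noncomputable def Kk (η : ℕ → ℕ) (s : ℕ → ℕ → ℂ) (a : ℕ) (x : Equiv.Perm (Fin (η a)))
    (t : Equiv.Perm (Fin (η (a + 1)))) : ℂ :=
  ∑ l ∈ Finset.univ.filter (fun l : Fin (η (a + 1)) → Fin (η a) => StrictMono l),
    Fl l (fun i => s (a + 1) (t i)) (fun j => s a (x j)) * Wf (fun i => s (a + 1) (t i))

theorem Ffun_eq (M : ℕ) (η : ℕ → ℕ) (s : ℕ → ℕ → ℂ)
    (hcross : ∀ a < M, ∀ i < η (a + 1), ∀ j < η a, s (a + 1) i ≠ s a j)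
    (l : (a : Fin M) → Fin (η ((a : ℕ) + 1)) → Fin (η (a : ℕ)))
    (σ : (a : Fin (M + 1)) → Equiv.Perm (Fin (η a))) :
    Ffun (M + 2) η l (sPerm (M + 2) η s σ) =
      ∏ a : Fin M, Fl (l a) (fun i => s (a + 1) (σ a.succ i)) (fun j => s a (σ a.castSucc j)) := by
  unfold Ffun
  apply Finset.prod_congr rfl
  intro a _
  have ha : (a : ℕ) < M := a.2
  have h1 : ∀ i : Fin (η (a + 1)), sPerm (M + 2) η s σ (a + 1) i = s (a + 1) (σ a.succ i) := by
    intro i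
    have h : (a : ℕ) + 1 < M + 2 - 1 ∧ (i : ℕ) < η (a + 1) := ⟨by omega, i.2⟩
    exact dif_pos h
  have h0 : ∀ i : Fin (η a), sPerm (M + 2) η s σ a i = s a (σ a.castSucc i) := by
    intro i
    have h : (a : ℕ) < M + 2 - 1 ∧ (i : ℕ) < η a := ⟨by omega, i.2⟩
    exact dif_pos h
  unfold Fl
  apply Finset.prod_congr rfl
  intro i _
  rw [prod_Ioo_fin (l a i) (fun j => (sPerm (M + 2) η s σ (a + 1) i - sPerm (M + 2) η s σ a j + 1) /
    (sPerm (M + 2) η s σ (a + 1) i - sPerm (M + 2) η s σ a j)), h0, h1]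
  congr 1
  apply Finset.prod_congr rfl
  intro j _
  rw [h0, frac_plus]
  exact hcross a ha _ (Fin.is_lt _) _ (Fin.is_lt _)

theorem prodW_eq (M : ℕ) (η : ℕ → ℕ) (s : ℕ → ℕ → ℂ)
    (hinj : ∀ a < M + 1, Function.Injective (fun i : Fin (η a) => s a i))
    (σ : (a : Fin (M + 1)) → Equiv.Perm (Fin (η a))) :
    ∏ a ∈ Finset.Ico 1 (M + 1), Wg (η a) (fun i => sPerm (M + 2) η s σ a i) =
      ∏ a : Fin M, Wf (fun i => s (a + 1) (σ a.succ i)) := by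
  rw [Finset.prod_Ico_eq_prod_range, Nat.add_sub_cancel, Finset.prod_range]
  apply Finset.prod_congr rfl
  intro a _
  have ha : (a : ℕ) < M := a.2
  rw [add_comm 1 (a : ℕ)]
  apply Wg_eq
  · intro i
    have h : (a : ℕ) + 1 < M + 2 - 1 ∧ (i : ℕ) < η (a + 1) := ⟨by omega, i.2⟩
    exact dif_pos h
  · intro i j h
    exact (σ a.succ).injective (hinj (a + 1) (by omega) h)

theorem main_aux (M : ℕ) (η : ℕ → ℕ)
    (hmono : ∀ a < M, η (a + 1) ≤ η a)
    (s : ℕ → ℕ → ℂ)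
    (hinj : ∀ a < M + 1, Function.Injective (fun i : Fin (η a) => s a i))
    (hcross : ∀ a < M, ∀ i < η (a + 1), ∀ j < η a, s (a + 1) i ≠ s a j) :
    ∑ l ∈ Finset.univ.filter
        (fun l : (a : Fin M) → Fin (η ((a : ℕ) + 1)) → Fin (η (a : ℕ)) =>
          ∀ a, StrictMono (l a)),
      ∑ σ ∈ Finset.univ.filter
          (fun σ : (a : Fin (M + 1)) → Equiv.Perm (Fin (η a)) => σ 0 = 1),
        Ffun (M + 2) η l (sPerm (M + 2) η s σ) *
          ∏ a ∈ Finset.Ico 1 (M + 1), Wg (η a) (fun i => sPerm (M + 2) η s σ a i) =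
    ∏ a ∈ Finset.range M, G (η (a + 1)) (η a) (s (a + 1)) (s a) := by
  rw [Finset.sum_comm, Finset.sum_filter]
  have hg : ∀ a < M, ∀ x : Equiv.Perm (Fin (η a)),
      ∑ t, Kk η s a x t = G (η (a + 1)) (η a) (s (a + 1)) (s a) := by
    intro a ha x
    have hy := hinj (a + 1) (by omega)
    have hz := hinj a (by omega)
    have hyz : ∀ (i : Fin (η (a + 1))) (j : Fin (η a)), s (a + 1) i ≠ s a j :=
      fun i j => hcross a ha i i.2 j j.2
    rw [G_eq _ _ (hmono a ha) _ _ hy hz hyz, ← im_perm (fun i : Fin (η a) => s a i) x]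
    have h := Hd_eq (fun i : Fin (η (a + 1)) => s (a + 1) i) (fun j : Fin (η a) => s a (x j)) hy
      (fun i j h => x.injective (hz h)) (fun i j => hyz i (x j))
    rw [← h]
    unfold Kk Hd
    rw [Finset.sum_comm]
  rw [← chain_sum M (fun a => Equiv.Perm (Fin (η a))) (Kk η s) _ hg 1]
  apply Finset.sum_congr rfl
  intro σ _
  refine if_congr Iff.rfl ?_ rfl
  unfold Kk
  rw [Finset.prod_univ_sum]
  have hf : Finset.univ.filter (fun l : (a : Fin M) → Fin (η ((a : ℕ) + 1)) → Fin (η (a : ℕ)) =>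
      ∀ a, StrictMono (l a)) = Fintype.piFinset (fun a : Fin M =>
        Finset.univ.filter (fun l : Fin (η ((a : ℕ) + 1)) → Fin (η (a : ℕ)) => StrictMono l)) := by
    ext l
    simp [Fintype.mem_piFinset]
  rw [hf]
  apply Finset.sum_congr rfl
  intro l _
  rw [Ffun_eq M η s hcross, prodW_eq M η s hinj, ← Finset.prod_mul_distrib]
  rfl

/-- `∑_l S̄ym^{η̈}_{s̈}(F_l(s)) = ∏_{a=1}^{N−2} G_{η^{a+1}, η^a}(s^{a+1}; s^a)`,
the sum over all collections `l` with `1 ≤ l^a_1 < … < l^a_{η^{a+1}} ≤ η^a`; the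
symmetrization `S̄ym^{η̈}` is over the groups `a = 2, …, N−1` only (encoded by requiring
the first permutation to be the identity), with weight `∏_{a≥2} W_{η^a}`. -/
theorem sumF_eq_prod_G (N : ℕ) (hN : 2 ≤ N) (η : ℕ → ℕ)
    (hmono : ∀ a, a + 1 < N - 1 → η (a + 1) ≤ η a)
    (hpos : 1 ≤ η (N - 2))
    (s : ℕ → ℕ → ℂ)
    (hinj : ∀ a < N - 1, ∀ i < η a, ∀ j < η a, i ≠ j → s a i ≠ s a j)
    (hcross : ∀ a, 1 ≤ a → a < N - 1 → ∀ i < η a, ∀ j < η (a - 1), s a i ≠ s (a - 1) j) :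
    ∑ l ∈ Finset.univ.filter
        (fun l : (a : Fin (N - 1 - 1)) → Fin (η ((a : ℕ) + 1)) → Fin (η (a : ℕ)) =>
          ∀ a, StrictMono (l a)),
      ∑ σ ∈ Finset.univ.filter
          (fun σ : (a : Fin (N - 1)) → Equiv.Perm (Fin (η a)) =>
            σ ⟨0, by omega⟩ = 1),
        Ffun N η l (sPerm N η s σ) *
          ∏ a ∈ Finset.Ico 1 (N - 1), Wg (η a) (fun i => sPerm N η s σ a i) =
    ∏ a ∈ Finset.range (N - 2), G (η (a + 1)) (η a) (s (a + 1)) (s a) := by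
  obtain ⟨M, rfl⟩ : ∃ M, N = M + 2 := ⟨N - 2, by omega⟩
  exact main_aux M η (fun a ha => hmono a (by omega)) s
    (fun a ha i j h => by
      by_contra hne
      exact hinj a (by omega) i i.2 j j.2 (fun e => hne (Fin.ext e)) h)
    (fun a ha i hi j hj => hcross (a + 1) (by omega) (by omega) i hi j hj)
end
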